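/- arXiv:1503.02429 — 7 statements merged into one kernel-verified Lean document; each statement's English description precedes it below -/
import Mathlib

section
/- Let ψ(x) = −ln|x| on ℝ²∖{0}. Suppose γ: ℝ × [0,T) → ℝ²∖{0} evolves by ψMCF, and for every t the closed curve γ(·,t) has turning number 1; let A(t) denote its signed area and w(t) its winding number about the origin. Then A′(t) = −2π(1 − w(t)) for every t ∈ [0,T). In particular, if w(t) = 0 for all t then A(t) = A(0) − 2πt (so the signed area reaches 0 exactly at time A(0)/(2π)), while if w(t) = 1 for all t then A(t) = A(0) for all t. -/
noncomputable section
open Real Set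

def dot2 (v w : ℝ × ℝ) : ℝ := v.1 * w.1 + v.2 * w.2

def nrm2 (v : ℝ × ℝ) : ℝ := Real.sqrt (v.1 ^ 2 + v.2 ^ 2)

def Jrot (v : ℝ × ℝ) : ℝ × ℝ := (-v.2, v.1)

structure IsClosedCurve (γ : ℝ → ℝ × ℝ) : Prop where
  smooth : ContDiff ℝ (⊤ : ℕ∞) γ
  periodic : Function.Periodic γ (2 * π)
  regular : ∀ u, deriv γ u ≠ 0

def tangentC (γ : ℝ → ℝ × ℝ) (u : ℝ) : ℝ × ℝ := (nrm2 (deriv γ u))⁻¹ • deriv γ u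

def normalC (γ : ℝ → ℝ × ℝ) (u : ℝ) : ℝ × ℝ := Jrot (tangentC γ u)

def arcDeriv {F : Type*} [NormedAddCommGroup F] [NormedSpace ℝ F]
    (γ : ℝ → ℝ × ℝ) (h : ℝ → F) (u : ℝ) : F :=
  (nrm2 (deriv γ u))⁻¹ • deriv h u

def curvature (γ : ℝ → ℝ × ℝ) (u : ℝ) : ℝ :=
  dot2 (arcDeriv γ (tangentC γ) u) (normalC γ u)

def psiCurv (ψ : ℝ × ℝ → ℝ) (γ : ℝ → ℝ × ℝ) (u : ℝ) : ℝ :=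
  curvature γ u - fderiv ℝ ψ (γ u) (normalC γ u)

def IsPsiMinimal (ψ : ℝ × ℝ → ℝ) (γ : ℝ → ℝ × ℝ) : Prop :=
  ∀ u, psiCurv ψ γ u = 0

def signedArea (γ : ℝ → ℝ × ℝ) : ℝ :=
  (1/2) * ∫ u in (0:ℝ)..(2*π), ((γ u).1 * (deriv γ u).2 - (γ u).2 * (deriv γ u).1)

def turningNumber (γ : ℝ → ℝ × ℝ) : ℝ :=
  (1/(2*π)) * ∫ u in (0:ℝ)..(2*π), curvature γ u * nrm2 (deriv γ u)

def windingNumber (γ : ℝ → ℝ × ℝ) : ℝ :=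
  (1/(2*π)) * ∫ u in (0:ℝ)..(2*π),
    ((γ u).1 * (deriv γ u).2 - (γ u).2 * (deriv γ u).1) / (nrm2 (γ u))^2

def hess2 (ψ : ℝ × ℝ → ℝ) (x v : ℝ × ℝ) : ℝ :=
  fderiv ℝ (fun y => fderiv ℝ ψ y v) x v

def SmoothFamily (γ : ℝ → ℝ → ℝ × ℝ) : Prop :=
  ContDiff ℝ (⊤ : ℕ∞) fun p : ℝ × ℝ => γ p.1 p.2

lemma hasDerivAt_slice1 {F : Type*} [NormedAddCommGroup F] [NormedSpace ℝ F]
    {f : ℝ × ℝ → F} (hf : Differentiable ℝ f) (t u : ℝ) :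
    HasDerivAt (fun τ => f (τ, u)) (fderiv ℝ f (t, u) (1, 0)) t := by
  have h1 : HasDerivAt (fun τ : ℝ => ((τ, u) : ℝ × ℝ)) (1, 0) t :=
    (hasDerivAt_id t).prodMk (hasDerivAt_const t u)
  exact (hf (t, u)).hasFDerivAt.comp_hasDerivAt t h1

lemma hasDerivAt_slice2 {F : Type*} [NormedAddCommGroup F] [NormedSpace ℝ F]
    {f : ℝ × ℝ → F} (hf : Differentiable ℝ f) (t u : ℝ) :
    HasDerivAt (fun v => f (t, v)) (fderiv ℝ f (t, u) (0, 1)) u := by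
  have h1 : HasDerivAt (fun v : ℝ => ((t, v) : ℝ × ℝ)) (0, 1) u :=
    (hasDerivAt_const u t).prodMk (hasDerivAt_id u)
  exact (hf (t, u)).hasFDerivAt.comp_hasDerivAt u h1

lemma hasDerivAt_param_integral {f : ℝ × ℝ → ℝ} (hf : ContDiff ℝ 1 f) (a b t : ℝ) :
    HasDerivAt (fun τ => ∫ u in a..b, f (τ, u)) (∫ u in a..b, fderiv ℝ f (t, u) (1, 0)) t := by
  have hd : Differentiable ℝ f := hf.differentiable (by simp)
  have hc : Continuous (fun p => fderiv ℝ f p (1, 0)) :=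
    (hf.continuous_fderiv (by simp)).clm_apply continuous_const
  have hK : IsCompact (Icc (t - 1) (t + 1) ×ˢ uIcc a b) := isCompact_Icc.prod isCompact_uIcc
  obtain ⟨C, hC⟩ := hK.exists_bound_of_continuousOn hc.continuousOn
  refine (intervalIntegral.hasDerivAt_integral_of_dominated_loc_of_deriv_le
    (F := fun τ u => f (τ, u)) (F' := fun τ u => fderiv ℝ f (τ, u) (1, 0))
    (bound := fun _ => C) (s := Icc (t - 1) (t + 1))
    (Icc_mem_nhds (by linarith) (by linarith)) ?_ ?_ ?_ ?_ ?_ ?_).2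
  · refine Filter.Eventually.of_forall fun τ => ?_
    have : Continuous (fun u => f (τ, u)) := hf.continuous.comp (by fun_prop)
    exact this.aestronglyMeasurable
  · have : Continuous (fun u => f (t, u)) := hf.continuous.comp (by fun_prop)
    exact this.intervalIntegrable _ _
  · have : Continuous (fun u => fderiv ℝ f (t, u) (1, 0)) :=
      hc.comp (g := fun p => fderiv ℝ f p (1, 0)) (f := fun u : ℝ => (t, u)) (by fun_prop)
    exact this.aestronglyMeasurable
  · exact Filter.Eventually.of_forall fun u hu τ hτ => hC (τ, u) ⟨hτ, uIoc_subset_uIcc hu⟩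
  · exact intervalIntegrable_const
  · exact Filter.Eventually.of_forall fun u _ τ _ => hasDerivAt_slice1 hd τ u

lemma area_first_variation {x y : ℝ × ℝ → ℝ} (hx : ContDiff ℝ 2 x) (hy : ContDiff ℝ 2 y)
    (a b t : ℝ)
    (hper : x (t, b) * fderiv ℝ y (t, b) (1, 0) - y (t, b) * fderiv ℝ x (t, b) (1, 0)
      = x (t, a) * fderiv ℝ y (t, a) (1, 0) - y (t, a) * fderiv ℝ x (t, a) (1, 0)) :
    HasDerivAt (fun τ => (1 / 2) * ∫ u in a..b,
        (x (τ, u) * fderiv ℝ y (τ, u) (0, 1) - y (τ, u) * fderiv ℝ x (τ, u) (0, 1)))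
      (∫ u in a..b, (fderiv ℝ x (t, u) (1, 0) * fderiv ℝ y (t, u) (0, 1)
        - fderiv ℝ y (t, u) (1, 0) * fderiv ℝ x (t, u) (0, 1))) t := by
  have key : ∀ {z : ℝ × ℝ → ℝ}, ContDiff ℝ 2 z → ∀ v : ℝ × ℝ,
      ContDiff ℝ 1 (fun p => fderiv ℝ z p v) := fun hz v =>
    (hz.fderiv_right (m := 1) (by norm_num)).clm_apply contDiff_const
  have key2 : ∀ {z : ℝ × ℝ → ℝ}, ContDiff ℝ 2 z → ∀ v w p,
      fderiv ℝ (fun q => fderiv ℝ z q v) p w = fderiv ℝ (fderiv ℝ z) p w v := by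
    intro z hz v w p
    have hd : DifferentiableAt ℝ (fderiv ℝ z) p :=
      ((hz.fderiv_right (m := 1) (by norm_num)).differentiable (by simp)) p
    rw [fderiv_clm_apply hd (differentiableAt_const v)]
    simp
  have symm : ∀ {z : ℝ × ℝ → ℝ}, ContDiff ℝ 2 z → ∀ v w p,
      fderiv ℝ (fun q => fderiv ℝ z q v) p w = fderiv ℝ (fun q => fderiv ℝ z q w) p v := by
    intro z hz v w p
    rw [key2 hz, key2 hz]
    exact (hz.contDiffAt.isSymmSndFDerivAt (by simp)) w v
  have hx1 : ContDiff ℝ 1 x := hx.of_le (by norm_num)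
  have hy1 : ContDiff ℝ 1 y := hy.of_le (by norm_num)
  have xd := hx1.differentiable (by simp)
  have yd := hy1.differentiable (by simp)
  have Fc : ContDiff ℝ 1 (fun p => x p * fderiv ℝ y p (0, 1) - y p * fderiv ℝ x p (0, 1)) :=
    (hx1.mul (key hy _)).sub (hy1.mul (key hx _))
  have Hc : ContDiff ℝ 1 (fun p => x p * fderiv ℝ y p (1, 0) - y p * fderiv ℝ x p (1, 0)) :=
    (hx1.mul (key hy _)).sub (hy1.mul (key hx _))
  have Hd := Hc.differentiable (by simp)
  have hmain := (hasDerivAt_param_integral Fc a b t).const_mul (1 / 2)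
  refine hmain.congr_deriv ?_
  have hft : ∫ u in a..b, fderiv ℝ
      (fun p => x p * fderiv ℝ y p (1, 0) - y p * fderiv ℝ x p (1, 0)) (t, u) (0, 1) = 0 := by
    rw [intervalIntegral.integral_eq_sub_of_hasDerivAt
      (fun u _ => hasDerivAt_slice2 Hd t u)]
    · simp only [hper, sub_self]
    · have hc : Continuous (fun p => fderiv ℝ
        (fun p => x p * fderiv ℝ y p (1, 0) - y p * fderiv ℝ x p (1, 0)) p (0, 1)) :=
        (Hc.continuous_fderiv (by simp)).clm_apply continuous_const
      exact (hc.comp (f := fun u : ℝ => (t, u)) (by fun_prop)).intervalIntegrable _ _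
  have hpt : ∀ u, fderiv ℝ
      (fun p => x p * fderiv ℝ y p (0, 1) - y p * fderiv ℝ x p (0, 1)) (t, u) (1, 0)
      = 2 * (fderiv ℝ x (t, u) (1, 0) * fderiv ℝ y (t, u) (0, 1)
        - fderiv ℝ y (t, u) (1, 0) * fderiv ℝ x (t, u) (0, 1))
       + fderiv ℝ
      (fun p => x p * fderiv ℝ y p (1, 0) - y p * fderiv ℝ x p (1, 0)) (t, u) (0, 1) := by
    intro u
    have gen : ∀ v w, fderiv ℝ
      (fun p => x p * fderiv ℝ y p v - y p * fderiv ℝ x p v) (t, u) w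
      = fderiv ℝ x (t, u) w * fderiv ℝ y (t, u) v
        + x (t, u) * fderiv ℝ (fun q => fderiv ℝ y q v) (t, u) w
        - fderiv ℝ y (t, u) w * fderiv ℝ x (t, u) v
        - y (t, u) * fderiv ℝ (fun q => fderiv ℝ x q v) (t, u) w := by
      intro v w
      have e1 := ((xd (t, u)).hasFDerivAt.mul
        (((key hy v).differentiable (by simp)) (t, u)).hasFDerivAt)
      have e2 := ((yd (t, u)).hasFDerivAt.mul
        (((key hx v).differentiable (by simp)) (t, u)).hasFDerivAt)
      have e3 := (e1.sub e2).fderiv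
      refine (DFunLike.congr_fun e3 w).trans ?_
      simp
      ring
    rw [gen, gen, symm hy (0, 1) (1, 0), symm hx (0, 1) (1, 0)]
    ring
  have hci : ∀ {z : ℝ × ℝ → ℝ}, ContDiff ℝ 2 z → ∀ v : ℝ × ℝ,
      Continuous (fun u : ℝ => fderiv ℝ z (t, u) v) := fun hz v =>
    (key hz v).continuous.comp (f := fun u : ℝ => (t, u)) (by fun_prop)
  simp_rw [hpt]
  rw [intervalIntegral.integral_add, hft, intervalIntegral.integral_const_mul]
  · ring
  · exact (continuous_const.mul (((hci hx _).mul (hci hy _)).sub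
      ((hci hy _).mul (hci hx _)))).intervalIntegrable _ _
  · have hc : Continuous (fun p => fderiv ℝ
        (fun p => x p * fderiv ℝ y p (1, 0) - y p * fderiv ℝ x p (1, 0)) p (0, 1)) :=
        (Hc.continuous_fderiv (by simp)).clm_apply continuous_const
    exact (hc.comp (f := fun u : ℝ => (t, u)) (by fun_prop)).intervalIntegrable _ _

lemma sq_add_pos_of_ne {v : ℝ × ℝ} (h : v ≠ 0) : 0 < v.1 ^ 2 + v.2 ^ 2 := by
  by_contra hc
  have h1 : v.1 = 0 := by nlinarith [sq_nonneg v.1, sq_nonneg v.2]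
  have h2 : v.2 = 0 := by nlinarith [sq_nonneg v.1, sq_nonneg v.2]
  exact h (Prod.ext h1 h2)

lemma nrm2_sq (v : ℝ × ℝ) : nrm2 v ^ 2 = v.1 ^ 2 + v.2 ^ 2 :=
  Real.sq_sqrt (by positivity)

lemma fderiv_log_nrm {g : ℝ × ℝ} (hg : g ≠ 0) (w : ℝ × ℝ) :
    fderiv ℝ (fun x => - Real.log (nrm2 x)) g w
      = - ((g.1 * w.1 + g.2 * w.2) / nrm2 g ^ 2) := by
  have hp := sq_add_pos_of_ne hg
  have e : (fun x : ℝ × ℝ => - Real.log (nrm2 x))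
      = fun x => -(1 / 2 : ℝ) * Real.log (x.1 ^ 2 + x.2 ^ 2) := by
    funext x
    rw [nrm2, Real.log_sqrt (by positivity)]
    ring
  have h1 : HasFDerivAt (fun x : ℝ × ℝ => x.1) (ContinuousLinearMap.fst ℝ ℝ ℝ) g := hasFDerivAt_fst
  have h2 : HasFDerivAt (fun x : ℝ × ℝ => x.2) (ContinuousLinearMap.snd ℝ ℝ ℝ) g := hasFDerivAt_snd
  have h3 := (((h1.pow 2).add (h2.pow 2)).log hp.ne').const_mul (-(1 / 2 : ℝ))
  rw [e, nrm2_sq]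
  refine (DFunLike.congr_fun h3.fderiv w).trans ?_
  simp
  field_simp
  ring

lemma flow_det (c : ℝ → ℝ × ℝ) (u : ℝ) (hg : c u ≠ 0) (hv : deriv c u ≠ 0) :
    (psiCurv (fun x => - Real.log (nrm2 x)) c u • normalC c u).1 * (deriv c u).2
      - (psiCurv (fun x => - Real.log (nrm2 x)) c u • normalC c u).2 * (deriv c u).1
    = ((c u).1 * (deriv c u).2 - (c u).2 * (deriv c u).1) / nrm2 (c u) ^ 2
      - curvature c u * nrm2 (deriv c u) := by
  have hp := sq_add_pos_of_ne hv
  have hn : nrm2 (deriv c u) ≠ 0 := (Real.sqrt_pos.mpr hp).ne'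
  have hs := nrm2_sq (deriv c u)
  have hq := sq_add_pos_of_ne hg
  have hng : nrm2 (c u) ≠ 0 := (Real.sqrt_pos.mpr hq).ne'
  unfold psiCurv
  rw [fderiv_log_nrm hg]
  simp only [normalC, Jrot, tangentC, Prod.smul_fst, Prod.smul_snd, smul_eq_mul]
  generalize curvature c u = k
  generalize nrm2 (deriv c u) = n at *
  generalize nrm2 (c u) = m at *
  field_simp
  linear_combination (-(k * m ^ 2 * n - (c u).1 * (deriv c u).2 + (c u).2 * (deriv c u).1)) * (-hs)

lemma flow_periodic {c : ℝ → ℝ × ℝ} (hc : Function.Periodic c (2 * π)) (ψ : ℝ × ℝ → ℝ) (u : ℝ) :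
    psiCurv ψ c (u + 2 * π) • normalC c (u + 2 * π) = psiCurv ψ c u • normalC c u := by
  have pd : ∀ {h : ℝ → ℝ × ℝ}, Function.Periodic h (2 * π) →
      ∀ u, deriv h (u + 2 * π) = deriv h u := by
    intro h hh u
    rw [← deriv_comp_add_const]
    congr 1
    exact funext hh
  have ht : Function.Periodic (tangentC c) (2 * π) := fun u => by
    simp only [tangentC, pd hc]
  have hn : normalC c (u + 2 * π) = normalC c u := by simp only [normalC, ht u]
  simp only [psiCurv, curvature, arcDeriv, hn, pd ht, pd hc, hc u]

lemma area_deriv_critical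
    (γ : ℝ → ℝ → ℝ × ℝ) (hfam : SmoothFamily γ) (t : ℝ)
    (hclosed : IsClosedCurve (γ t))
    (havoid : ∀ u : ℝ, γ t u ≠ 0)
    (hflow : ∀ u : ℝ,
      deriv (fun τ => γ τ u) t
        = psiCurv (fun x => - Real.log (nrm2 x)) (γ t) u • normalC (γ t) u)
    (hturn : turningNumber (γ t) = 1) :
    HasDerivAt (fun τ => signedArea (γ τ))
          (-(2 * π) * (1 - windingNumber (γ t))) t := by
  set g : ℝ × ℝ → ℝ × ℝ := fun p => γ p.1 p.2 with hg
  have hg2 : ContDiff ℝ 2 g := contDiff_infty.1 hfam 2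
  have hx : ContDiff ℝ 2 (fun p => (g p).1) := hg2.fst
  have hy : ContDiff ℝ 2 (fun p => (g p).2) := hg2.snd
  have gd : Differentiable ℝ g := hg2.differentiable (by simp)
  have f1 : ∀ p v, fderiv ℝ (fun p => (g p).1) p v = (fderiv ℝ g p v).1 := fun p v => by
    rw [((gd p).hasFDerivAt.fst).fderiv]; rfl
  have f2 : ∀ p v, fderiv ℝ (fun p => (g p).2) p v = (fderiv ℝ g p v).2 := fun p v => by
    rw [((gd p).hasFDerivAt.snd).fderiv]; rfl
  have du : ∀ τ u, fderiv ℝ g (τ, u) (0, 1) = deriv (γ τ) u := fun τ u =>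
    ((hasDerivAt_slice2 gd τ u).deriv).symm
  have dt : ∀ u, fderiv ℝ g (t, u) (1, 0)
      = psiCurv (fun x => - Real.log (nrm2 x)) (γ t) u • normalC (γ t) u := fun u => by
    rw [← hflow u]
    exact ((hasDerivAt_slice1 gd t u).deriv).symm
  have hp1 : γ t (2 * π) = γ t 0 := by simpa using hclosed.periodic 0
  have hp2 := flow_periodic hclosed.periodic (fun x => - Real.log (nrm2 x)) 0
  rw [zero_add] at hp2
  have hmain := area_first_variation hx hy 0 (2 * π) t (by
    simp only [f1, f2, dt, hp2]
    simp only [hg, hp1])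
  have hDc : Continuous (fun u : ℝ => fderiv ℝ (fun p => (g p).1) (t, u) (1, 0)
      * fderiv ℝ (fun p => (g p).2) (t, u) (0, 1)
      - fderiv ℝ (fun p => (g p).2) (t, u) (1, 0) * fderiv ℝ (fun p => (g p).1) (t, u) (0, 1)) := by
    have hci : ∀ {z : ℝ × ℝ → ℝ}, ContDiff ℝ 2 z → ∀ v : ℝ × ℝ,
        Continuous (fun u : ℝ => fderiv ℝ z (t, u) v) := fun hz v =>
      ((hz.continuous_fderiv (by simp)).clm_apply continuous_const).comp
        (f := fun u : ℝ => (t, u)) (by fun_prop)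
    exact ((hci hx _).mul (hci hy _)).sub ((hci hy _).mul (hci hx _))
  simp only [f1, f2, du, dt] at hmain hDc
  have hpt := fun u => flow_det (γ t) u (havoid u) (hclosed.regular u)
  simp only [hpt] at hmain hDc
  have hWc : Continuous (fun u => ((γ t u).1 * (deriv (γ t) u).2 - (γ t u).2 * (deriv (γ t) u).1)
      / nrm2 (γ t u) ^ 2) := by
    have c1 : Continuous (γ t) := hclosed.smooth.continuous
    have c2 : Continuous (deriv (γ t)) := hclosed.smooth.continuous_deriv (by simp)
    simp only [nrm2_sq]
    exact ((c1.fst.mul c2.snd).sub (c1.snd.mul c2.fst)).div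
      ((c1.fst.pow 2).add (c1.snd.pow 2)) fun u => (sq_add_pos_of_ne (havoid u)).ne'
  have hKc : Continuous (fun u => curvature (γ t) u * nrm2 (deriv (γ t) u)) := by
    refine (hWc.sub hDc).congr fun u => ?_
    simp only [Pi.sub_apply, sub_sub_cancel]
  refine HasDerivAt.congr_deriv (f := fun τ => signedArea (γ τ)) hmain ?_
  rw [intervalIntegral.integral_sub (hWc.intervalIntegrable _ _) (hKc.intervalIntegrable _ _)]
  unfold turningNumber at hturn
  unfold windingNumber
  have hpi := Real.pi_ne_zero
  field_simp at hturn ⊢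
  linarith

/-- evolution of the signed area under ψMCF for the critical
radial density ψ(x) = −ln|x| on ℝ²∖{0}. -/
theorem area_evolution_critical_density
    (T : ℝ) (hT : 0 < T) (γ : ℝ → ℝ → ℝ × ℝ)
    (hfam : SmoothFamily γ)
    (hclosed : ∀ t ∈ Set.Ico (0:ℝ) T, IsClosedCurve (γ t))
    (havoid : ∀ t ∈ Set.Ico (0:ℝ) T, ∀ u : ℝ, γ t u ≠ 0)
    (hflow : ∀ t ∈ Set.Ico (0:ℝ) T, ∀ u : ℝ,
      deriv (fun τ => γ τ u) t
        = psiCurv (fun x => - Real.log (nrm2 x)) (γ t) u • normalC (γ t) u)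
    (hturn : ∀ t ∈ Set.Ico (0:ℝ) T, turningNumber (γ t) = 1) :
    (∀ t ∈ Set.Ico (0:ℝ) T,
        HasDerivAt (fun τ => signedArea (γ τ))
          (-(2 * π) * (1 - windingNumber (γ t))) t)
    ∧ ((∀ t ∈ Set.Ico (0:ℝ) T, windingNumber (γ t) = 0) →
        ∀ t ∈ Set.Ico (0:ℝ) T,
          signedArea (γ t) = signedArea (γ 0) - 2 * π * t)
    ∧ ((∀ t ∈ Set.Ico (0:ℝ) T, windingNumber (γ t) = 1) →
        ∀ t ∈ Set.Ico (0:ℝ) T, signedArea (γ t) = signedArea (γ 0)) := by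
  have hD : ∀ t ∈ Set.Ico (0:ℝ) T, HasDerivAt (fun τ => signedArea (γ τ))
      (-(2 * π) * (1 - windingNumber (γ t))) t := fun t ht =>
    area_deriv_critical γ hfam t (hclosed t ht) (havoid t ht) (hflow t ht) (hturn t ht)
  have hlin : ∀ c : ℝ, (∀ t ∈ Set.Ico (0:ℝ) T, HasDerivAt (fun τ => signedArea (γ τ)) c t) →
      ∀ t ∈ Set.Ico (0:ℝ) T, signedArea (γ t) = signedArea (γ 0) + c * t := by
    intro c hc t ht
    have hd : ∀ s ∈ Set.Icc (0:ℝ) t,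
        HasDerivAt (fun τ => signedArea (γ τ) - c * τ) 0 s := fun s hs => by
      have := (hc s ⟨hs.1, hs.2.trans_lt ht.2⟩).sub ((hasDerivAt_id s).const_mul c)
      exact this.congr_deriv (by simp)
    have := constant_of_has_deriv_right_zero
      (fun s hs => (hd s hs).continuousAt.continuousWithinAt)
      (fun s hs => (hd s ⟨hs.1, hs.2.le⟩).hasDerivWithinAt) t ⟨ht.1, le_rfl⟩
    simp only [mul_zero, sub_zero] at this
    linarith
  refine ⟨hD, fun hw t ht => ?_, fun hw t ht => ?_⟩
  · rw [hlin (-(2 * π)) (fun s hs => by simpa [hw s hs] using hD s hs) t ht]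
    ring
  · rw [hlin 0 (fun s hs => by simpa [hw s hs] using hD s hs) t ht]
    ring
end
end

section
/- Let ε ∈ {−1, 1}, μ > 0, and ψ(x) = ε·μ²|x|²/2 on ℝ² (Gaussian density for ε = −1, anti-Gaussian for ε = 1). Suppose γ: ℝ × [0,T) → ℝ² evolves by ψMCF and for every t the closed curve γ(·,t) has turning number 1; let A(t) be its signed area. Then A′(t) = −2π − 2εμ²·A(t), hence A(t) = (A(0) + επ/μ²)e^{−2εμ²t} − επ/μ². In particular: for ε = 1 and A(0) = A₀ > 0 the signed area vanishes exactly at t = (1/(2μ²))·ln(1 + μ²A₀/π); for ε = −1 and A(0) = π/μ² the signed area is constant in t. -/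
noncomputable section
open Real Set

def pd (v : ℝ × ℝ) (f : ℝ × ℝ → ℝ) (p : ℝ × ℝ) : ℝ := fderiv ℝ f p v

lemma pd_smooth {f : ℝ × ℝ → ℝ} (hf : ContDiff ℝ (⊤ : ℕ∞) f) (v : ℝ × ℝ) :
    ContDiff ℝ (⊤ : ℕ∞) (pd v f) := by
  unfold pd
  exact (hf.fderiv_right (m := (⊤ : ℕ∞)) (by simp)).clm_apply contDiff_const

lemma smooth_diff {f : ℝ × ℝ → ℝ} (hf : ContDiff ℝ (⊤ : ℕ∞) f) : Differentiable ℝ f :=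
  hf.differentiable (by simp)

lemma pd_comm {f : ℝ × ℝ → ℝ} (hf : ContDiff ℝ (⊤ : ℕ∞) f) (v w p : ℝ × ℝ) :
    pd v (pd w f) p = pd w (pd v f) p := by
  have hd : Differentiable ℝ (fderiv ℝ f) :=
    (hf.fderiv_right (m := (⊤ : ℕ∞)) (by simp)).differentiable (by simp)
  have key : ∀ a b : ℝ × ℝ, pd a (pd b f) p = fderiv ℝ (fderiv ℝ f) p a b := by
    intro a b
    have h1 : HasFDerivAt (fun q => fderiv ℝ f q b)
        ((fderiv ℝ (fderiv ℝ f) p).flip b) p := by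
      simpa using (hd p).hasFDerivAt.clm_apply (hasFDerivAt_const b p)
    unfold pd
    rw [h1.fderiv]; rfl
  rw [key, key]
  have h2 : IsSymmSndFDerivAt ℝ f p :=
    (hf.contDiffAt (x := p)).isSymmSndFDerivAt (by simp only [minSmoothness_of_isRCLikeNormedField]; exact WithTop.coe_le_coe.2 (le_top : (2 : ℕ∞) ≤ ⊤))
  exact h2 v w

lemma hd_t {f : ℝ × ℝ → ℝ} (hf : ContDiff ℝ (⊤ : ℕ∞) f) (t u : ℝ) :
    HasDerivAt (fun s => f (s, u)) (pd (1, 0) f (t, u)) t :=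
  (smooth_diff hf (t, u)).hasFDerivAt.comp_hasDerivAt t
    ((hasDerivAt_id t).prodMk (hasDerivAt_const t u))

lemma hd_u {f : ℝ × ℝ → ℝ} (hf : ContDiff ℝ (⊤ : ℕ∞) f) (t u : ℝ) :
    HasDerivAt (fun s => f (t, s)) (pd (0, 1) f (t, u)) u :=
  (smooth_diff hf (t, u)).hasFDerivAt.comp_hasDerivAt u
    ((hasDerivAt_const u t).prodMk (hasDerivAt_id u))

lemma hd_int {f : ℝ × ℝ → ℝ} (hf : ContDiff ℝ (⊤ : ℕ∞) f) (t a b : ℝ) :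
    HasDerivAt (fun s => ∫ u in a..b, f (s, u)) (∫ u in a..b, pd (1, 0) f (t, u)) t := by
  have hc := hf.continuous
  have hc' := (pd_smooth hf (1, 0)).continuous
  obtain ⟨C, hC⟩ := ((isCompact_Icc (a := t - 1) (b := t + 1)).prod
    (isCompact_uIcc (a := a) (b := b))).exists_bound_of_continuousOn hc'.continuousOn
  refine (intervalIntegral.hasDerivAt_integral_of_dominated_loc_of_deriv_le
    (F := fun s u => f (s, u)) (F' := fun s u => pd (1, 0) f (s, u))
    (bound := fun _ => C) (s := Set.Icc (t - 1) (t + 1)) (Icc_mem_nhds (by linarith) (by linarith))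
    ?_ ?_ ?_ ?_ ?_ ?_).2
  · exact Filter.Eventually.of_forall fun s =>
      (Continuous.aestronglyMeasurable (by fun_prop))
  · exact Continuous.intervalIntegrable (by fun_prop) _ _
  · exact (Continuous.aestronglyMeasurable (by fun_prop))
  · refine Filter.Eventually.of_forall fun u hu s hs => hC (s, u) ⟨hs, Set.uIoc_subset_uIcc hu⟩
  · exact intervalIntegrable_const
  · exact Filter.Eventually.of_forall fun u _ s _ => hd_t hf s u

lemma fderiv_psi (c : ℝ) (x v : ℝ × ℝ) :
    fderiv ℝ (fun x => c * (nrm2 x) ^ 2 / 2) x v = c * (x.1 * v.1 + x.2 * v.2) := by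
  have h0 : (fun x : ℝ × ℝ => c * (nrm2 x) ^ 2 / 2) = fun x => c / 2 * (x.1 * x.1 + x.2 * x.2) := by
    funext x
    unfold nrm2
    rw [Real.sq_sqrt (by positivity)]; ring
  rw [h0]
  have h1 : HasFDerivAt (fun x : ℝ × ℝ => x.1) (ContinuousLinearMap.fst ℝ ℝ ℝ) x := hasFDerivAt_fst
  have h2 : HasFDerivAt (fun x : ℝ × ℝ => x.2) (ContinuousLinearMap.snd ℝ ℝ ℝ) x := hasFDerivAt_snd
  have h3 := ((h1.mul h1).add (h2.mul h2)).const_mul (c / 2)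
  have h4 := congrArg (fun L => L v) h3.fderiv
  refine Eq.trans h4 ?_
  simp
  ring

lemma nrm2_pos {v : ℝ × ℝ} (hv : v ≠ 0) : 0 < nrm2 v := by
  unfold nrm2
  apply Real.sqrt_pos.2
  by_contra h
  apply hv
  have h1 := sq_nonneg v.1
  have h2 := sq_nonneg v.2
  ext
  · exact pow_eq_zero_iff (two_ne_zero) |>.1 (by linarith)
  · exact pow_eq_zero_iff (two_ne_zero) |>.1 (by linarith)

lemma pointwise_flow (c k n : ℝ) (g d : ℝ × ℝ) (hd : d ≠ 0)
    (N w : ℝ × ℝ) (hn : n = nrm2 d) (hN : N = Jrot (n⁻¹ • d))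
    (hw : w = (k - c * (g.1 * N.1 + g.2 * N.2)) • N) :
    k * n = -(w.1 * d.2 - w.2 * d.1) - c * (g.1 * d.2 - g.2 * d.1) := by
  have hpos : 0 < n := hn ▸ nrm2_pos hd
  have hsq : n ^ 2 = d.1 ^ 2 + d.2 ^ 2 := by
    rw [hn]; unfold nrm2; exact Real.sq_sqrt (by positivity)
  have e1 : N.1 = -(n⁻¹ * d.2) := by rw [hN]; simp [Jrot]
  have e2 : N.2 = n⁻¹ * d.1 := by rw [hN]; simp [Jrot]
  have d1 : d.1 = n * N.2 := by rw [e2]; field_simp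
  have d2 : d.2 = -(n * N.1) := by rw [e1]; field_simp
  have hNN : N.1 ^ 2 + N.2 ^ 2 = 1 := by
    rw [e1, e2]; field_simp; linarith
  have w1 : w.1 = (k - c * (g.1 * N.1 + g.2 * N.2)) * N.1 := by rw [hw]; simp
  have w2 : w.2 = (k - c * (g.1 * N.1 + g.2 * N.2)) * N.2 := by rw [hw]; simp
  rw [w1, w2, d1, d2]
  linear_combination (-(k - c * (g.1 * N.1 + g.2 * N.2)) * n) * hNN

lemma area_deriv
    (c : ℝ) (T : ℝ) (γ : ℝ → ℝ → ℝ × ℝ)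
    (hfam : SmoothFamily γ)
    (hclosed : ∀ t ∈ Set.Ico (0:ℝ) T, IsClosedCurve (γ t))
    (hflow : ∀ t ∈ Set.Ico (0:ℝ) T, ∀ u : ℝ,
      deriv (fun τ => γ τ u) t
        = psiCurv (fun x => c * (nrm2 x) ^ 2 / 2) (γ t) u
            • normalC (γ t) u)
    (hturn : ∀ t ∈ Set.Ico (0:ℝ) T, turningNumber (γ t) = 1)
    (t : ℝ) (ht : t ∈ Set.Ico (0:ℝ) T) :
    HasDerivAt (fun τ => signedArea (γ τ)) (-(2 * π) - 2 * c * signedArea (γ t)) t := by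
  obtain ⟨X, hX⟩ : ∃ X : ℝ × ℝ → ℝ, X = fun p => (γ p.1 p.2).1 := ⟨_, rfl⟩
  obtain ⟨Y, hY⟩ : ∃ Y : ℝ × ℝ → ℝ, Y = fun p => (γ p.1 p.2).2 := ⟨_, rfl⟩
  have sX : ContDiff ℝ (⊤ : ℕ∞) X := by rw [hX]; exact contDiff_fst.comp hfam
  have sY : ContDiff ℝ (⊤ : ℕ∞) Y := by rw [hY]; exact contDiff_snd.comp hfam
  have hγ : ∀ s u, γ s u = (X (s, u), Y (s, u)) := by intro s u; rw [hX, hY]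
  have du : ∀ s u, deriv (γ s) u = (pd (0,1) X (s, u), pd (0,1) Y (s, u)) := by
    intro s u
    have h : γ s = fun u => (X (s, u), Y (s, u)) := funext (hγ s)
    rw [h]
    exact ((hd_u sX s u).prodMk (hd_u sY s u)).deriv
  have dt : ∀ s u, deriv (fun τ => γ τ u) s = (pd (1,0) X (s, u), pd (1,0) Y (s, u)) := by
    intro s u
    have h : (fun τ => γ τ u) = fun s => (X (s, u), Y (s, u)) := funext (fun s => hγ s u)
    rw [h]
    exact ((hd_t sX s u).prodMk (hd_t sY s u)).deriv
  have sXu := pd_smooth sX (0,1)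
  have sYu := pd_smooth sY (0,1)
  have sXt := pd_smooth sX (1,0)
  have sYt := pd_smooth sY (1,0)
  have sXut := pd_smooth sXt (0,1)
  have sYut := pd_smooth sYt (0,1)
  have cX := sX.continuous
  have cY := sY.continuous
  have cXu := sXu.continuous
  have cYu := sYu.continuous
  have cXt := sXt.continuous
  have cYt := sYt.continuous
  have cXut := sXut.continuous
  have cYut := sYut.continuous
  have hA : ∀ s, signedArea (γ s) = (1/2) * ∫ u in (0:ℝ)..(2*π),
      (X (s, u) * pd (0,1) Y (s, u) - Y (s, u) * pd (0,1) X (s, u)) := by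
    intro s
    unfold signedArea
    simp only [du, hγ]
  -- derivative of the integral
  have hG : ContDiff ℝ (⊤ : ℕ∞) (fun p => X p * pd (0,1) Y p - Y p * pd (0,1) X p) :=
    (sX.mul sYu).sub (sY.mul sXu)
  have hGt : ∀ u, pd (1,0) (fun p => X p * pd (0,1) Y p - Y p * pd (0,1) X p) (t, u)
      = 2 * (pd (1,0) X (t,u) * pd (0,1) Y (t,u) - pd (1,0) Y (t,u) * pd (0,1) X (t,u))
        + (pd (0,1) X (t,u) * pd (1,0) Y (t,u) + X (t,u) * pd (0,1) (pd (1,0) Y) (t,u)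
        - (pd (0,1) Y (t,u) * pd (1,0) X (t,u) + Y (t,u) * pd (0,1) (pd (1,0) X) (t,u))) := by
    intro u
    have h1 := hd_t hG t u
    have h2 := ((hd_t sX t u).mul (hd_t sYu t u)).sub ((hd_t sY t u).mul (hd_t sXu t u))
    have h3 := h1.unique h2
    rw [h3, pd_comm sX, pd_comm sY]
    ring
  have hper : ∀ u, γ t (u + 2 * π) = γ t u := (hclosed t ht).periodic
  have hperd : deriv (γ t) (2 * π) = deriv (γ t) 0 := by
    have h : (fun u => γ t (u + 2 * π)) = γ t := funext hper
    have := deriv_comp_add_const (γ t) (2 * π) 0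
    rw [h] at this
    simpa using this.symm
  have pT : ∀ u, tangentC (γ t) (u + 2 * π) = tangentC (γ t) u := by
    intro u
    have h : (fun u => γ t (u + 2 * π)) = γ t := funext hper
    have := deriv_comp_add_const (γ t) (2 * π) u
    rw [h] at this
    simp only [tangentC, this]
  have hpt : deriv (fun τ => γ τ (2 * π)) t = deriv (fun τ => γ τ 0) t := by
    rw [hflow t ht, hflow t ht]
    have hT0 : tangentC (γ t) (2 * π) = tangentC (γ t) 0 := by simpa using pT 0
    have h0 : γ t (2 * π) = γ t 0 := by simpa using hper 0
    have hdT : deriv (tangentC (γ t)) (2 * π) = deriv (tangentC (γ t)) 0 := by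
      have h : (fun u => tangentC (γ t) (u + 2 * π)) = tangentC (γ t) := funext pT
      have := deriv_comp_add_const (tangentC (γ t)) (2 * π) 0
      rw [h] at this
      simpa using this.symm
    simp only [psiCurv, curvature, arcDeriv, normalC, hT0, h0, hdT, hperd]
  have hbd : ∫ u in (0:ℝ)..(2*π), (pd (0,1) X (t,u) * pd (1,0) Y (t,u)
        + X (t,u) * pd (0,1) (pd (1,0) Y) (t,u)
        - (pd (0,1) Y (t,u) * pd (1,0) X (t,u) + Y (t,u) * pd (0,1) (pd (1,0) X) (t,u))) = 0 := by
    rw [intervalIntegral.integral_eq_sub_of_hasDerivAt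
      (f := fun u => X (t,u) * pd (1,0) Y (t,u) - Y (t,u) * pd (1,0) X (t,u))]
    · have h0 : γ t (2 * π) = γ t 0 := by simpa using hper 0
      rw [hγ, hγ, Prod.mk.injEq] at h0
      rw [dt, dt, Prod.mk.injEq] at hpt
      simp only [h0.1, h0.2, hpt.1, hpt.2, sub_self]
    · intro u _
      exact ((hd_u sX t u).mul (hd_u sYt t u)).sub ((hd_u sY t u).mul (hd_u sXt t u))
    · exact Continuous.intervalIntegrable (by fun_prop) _ _
  have hk : ∀ u, curvature (γ t) u * nrm2 (deriv (γ t) u)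
      = -(pd (1,0) X (t,u) * pd (0,1) Y (t,u) - pd (1,0) Y (t,u) * pd (0,1) X (t,u))
        - c * (X (t,u) * pd (0,1) Y (t,u) - Y (t,u) * pd (0,1) X (t,u)) := by
    intro u
    have h := pointwise_flow c (curvature (γ t) u) (nrm2 (deriv (γ t) u)) (γ t u) (deriv (γ t) u)
      ((hclosed t ht).regular u) (normalC (γ t) u) (deriv (fun τ => γ τ u) t) rfl rfl
      (by rw [hflow t ht]; unfold psiCurv; rw [fderiv_psi])
    rw [h, dt, du, hγ]
  have hI : ∫ u in (0:ℝ)..(2*π), curvature (γ t) u * nrm2 (deriv (γ t) u) = 2 * π := by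
    have := hturn t ht
    unfold turningNumber at this
    have hpi := Real.pi_pos
    field_simp at this
    linarith
  simp only [hk] at hI
  rw [intervalIntegral.integral_sub (Continuous.intervalIntegrable (by fun_prop) _ _)
    (Continuous.intervalIntegrable (by fun_prop) _ _), intervalIntegral.integral_neg,
    intervalIntegral.integral_const_mul] at hI
  have hmain := (hd_int hG t 0 (2*π)).const_mul (1/2)
  have hfun : (fun τ => signedArea (γ τ)) = fun τ => (1/2) * ∫ u in (0:ℝ)..(2*π),
      (X (τ, u) * pd (0,1) Y (τ, u) - Y (τ, u) * pd (0,1) X (τ, u)) := funext hA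
  rw [hfun, hA t]
  refine hmain.congr_deriv ?_
  simp only [hGt]
  rw [intervalIntegral.integral_add (Continuous.intervalIntegrable (by fun_prop) _ _)
    (Continuous.intervalIntegrable (by fun_prop) _ _), hbd, intervalIntegral.integral_const_mul]
  linarith

/-- evolution of the signed area under ψMCF for the (anti-)Gaussian
density ψ(x) = ε μ²|x|²/2 on ℝ². -/
theorem area_evolution_gaussian_density
    (ε μ : ℝ) (hε : ε = 1 ∨ ε = -1) (hμ : 0 < μ)
    (T : ℝ) (hT : 0 < T) (γ : ℝ → ℝ → ℝ × ℝ)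
    (hfam : SmoothFamily γ)
    (hclosed : ∀ t ∈ Set.Ico (0:ℝ) T, IsClosedCurve (γ t))
    (hflow : ∀ t ∈ Set.Ico (0:ℝ) T, ∀ u : ℝ,
      deriv (fun τ => γ τ u) t
        = psiCurv (fun x => ε * μ ^ 2 * (nrm2 x) ^ 2 / 2) (γ t) u
            • normalC (γ t) u)
    (hturn : ∀ t ∈ Set.Ico (0:ℝ) T, turningNumber (γ t) = 1) :
    (∀ t ∈ Set.Ico (0:ℝ) T,
        HasDerivAt (fun τ => signedArea (γ τ))
          (-(2 * π) - 2 * ε * μ ^ 2 * signedArea (γ t)) t)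
    ∧ (∀ t ∈ Set.Ico (0:ℝ) T,
        signedArea (γ t)
          = (signedArea (γ 0) + ε * π / μ ^ 2) * Real.exp (-2 * ε * μ ^ 2 * t)
            - ε * π / μ ^ 2)
    ∧ (ε = 1 → 0 < signedArea (γ 0) →
        ∀ t ∈ Set.Ico (0:ℝ) T,
          (signedArea (γ t) = 0 ↔
            t = (1 / (2 * μ ^ 2)) * Real.log (1 + μ ^ 2 * signedArea (γ 0) / π)))
    ∧ (ε = -1 → signedArea (γ 0) = π / μ ^ 2 →
        ∀ t ∈ Set.Ico (0:ℝ) T, signedArea (γ t) = signedArea (γ 0)) := by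
  have hμ0 : μ ≠ 0 := hμ.ne'
  have hε2 : ε * ε = 1 := by rcases hε with h | h <;> rw [h] <;> norm_num
  have H1 : ∀ t ∈ Set.Ico (0:ℝ) T,
        HasDerivAt (fun τ => signedArea (γ τ))
          (-(2 * π) - 2 * ε * μ ^ 2 * signedArea (γ t)) t := by
    intro t ht
    have h := area_deriv (ε * μ ^ 2) T γ hfam hclosed hflow hturn t ht
    refine h.congr_deriv ?_
    ring
  have H2 : ∀ t ∈ Set.Ico (0:ℝ) T,
        signedArea (γ t)
          = (signedArea (γ 0) + ε * π / μ ^ 2) * Real.exp (-2 * ε * μ ^ 2 * t)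
            - ε * π / μ ^ 2 := by
    intro t ht
    have hd : ∀ s ∈ Set.Ico (0:ℝ) T, HasDerivAt
        (fun s => (signedArea (γ s) + ε * π / μ ^ 2) * Real.exp (2 * ε * μ ^ 2 * s)) 0 s := by
      intro s hs
      have h1 := (H1 s hs).add_const (ε * π / μ ^ 2)
      have h2 := ((hasDerivAt_id s).const_mul (2 * ε * μ ^ 2)).exp
      refine (h1.mul h2).congr_deriv ?_
      simp only [id, mul_one]
      field_simp
      linear_combination (2 * π * Real.exp (2 * ε * μ ^ 2 * s)) * hε2
    have hsub : ∀ s ∈ Set.Icc (0:ℝ) t, s ∈ Set.Ico (0:ℝ) T :=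
      fun s hs => ⟨hs.1, hs.2.trans_lt ht.2⟩
    have hc := constant_of_has_deriv_right_zero
      (f := fun s => (signedArea (γ s) + ε * π / μ ^ 2) * Real.exp (2 * ε * μ ^ 2 * s))
      (a := 0) (b := t)
      (fun s hs => (hd s (hsub s hs)).continuousAt.continuousWithinAt)
      (fun s hs => (hd s (hsub s (Set.Ico_subset_Icc_self hs))).hasDerivWithinAt)
      t ⟨ht.1, le_rfl⟩
    simp only [mul_zero, Real.exp_zero, mul_one] at hc
    rw [← hc, mul_assoc, ← Real.exp_add]
    have : 2 * ε * μ ^ 2 * t + -2 * ε * μ ^ 2 * t = 0 := by ring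
    rw [this, Real.exp_zero]
    ring
  refine ⟨H1, H2, ?_, ?_⟩
  · intro h1 hA t ht
    have hpi := Real.pi_pos
    have hpos : 0 < 1 + μ ^ 2 * signedArea (γ 0) / π := by positivity
    have e1 : t = (1 / (2 * μ ^ 2)) * Real.log (1 + μ ^ 2 * signedArea (γ 0) / π)
        ↔ Real.log (1 + μ ^ 2 * signedArea (γ 0) / π) = 2 * μ ^ 2 * t := by
      constructor
      · intro h; rw [h]; field_simp
      · intro h; rw [h]; field_simp
    have e2 : Real.log (1 + μ ^ 2 * signedArea (γ 0) / π) = 2 * μ ^ 2 * t ↔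
        1 + μ ^ 2 * signedArea (γ 0) / π = Real.exp (2 * μ ^ 2 * t) := by
      constructor
      · intro h; rw [← h, Real.exp_log hpos]
      · intro h; rw [h, Real.log_exp]
    rw [e1, e2, H2 t ht, h1]
    have e3 : -2 * 1 * μ ^ 2 * t = -(2 * μ ^ 2 * t) := by ring
    rw [e3, Real.exp_neg]
    have hE := Real.exp_pos (2 * μ ^ 2 * t)
    generalize Real.exp (2 * μ ^ 2 * t) = E at *
    have hE0 := hE.ne'
    field_simp
    constructor <;> intro h <;> linarith
  · intro h1 hA t ht
    rw [H2 t ht, hA, h1]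
    ring
end
end

section
/- Let ψ(x) = φ(|x|) be a radial density on ℝ²∖{0} and let γ be a closed ψ-minimal plane curve whose image avoids the origin. If R = max_u |γ(u)|, then φ′(R) ≤ −1/R. Consequently, if R₀ > 0 and φ′(r) > −1/r for all r ∈ (0, R₀], then there is no closed ψ-minimal curve whose image is contained in the punctured disk {x : 0 < |x| ≤ R₀}. -/
noncomputable section
open Real Set

theorem aux_second {f : ℝ → ℝ} {u : ℝ} (hf : Continuous f) (hm : ∀ t, f t ≤ f u) :
    deriv f u = 0 ∧ deriv (deriv f) u ≤ 0 := by
  have hmax : IsLocalMax f u := Filter.Eventually.of_forall hm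
  have h0 := hmax.deriv_eq_zero
  refine ⟨h0, ?_⟩
  by_contra! hpos
  have hmin := isLocalMin_of_deriv_deriv_pos hpos h0 hf.continuousAt
  have heq : f =ᶠ[nhds u] fun _ => f u := by
    filter_upwards [hmin, hmax] with t h1 h2
    exact le_antisymm h2 h1
  have h2 := heq.deriv.deriv_eq
  simp at h2
  linarith

theorem aux_pos {v : ℝ × ℝ} (hv : v ≠ 0) : 0 < v.1 ^ 2 + v.2 ^ 2 := by
  by_contra! h
  apply hv
  ext
  · simp; nlinarith [sq_nonneg v.1, sq_nonneg v.2]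
  · simp; nlinarith [sq_nonneg v.1, sq_nonneg v.2]

theorem aux_curv {γ : ℝ → ℝ × ℝ} (h : IsClosedCurve γ) (u : ℝ) :
    curvature γ u * (nrm2 (deriv γ u)) ^ 3 =
      (deriv γ u).1 * (deriv (deriv γ) u).2 - (deriv γ u).2 * (deriv (deriv γ) u).1 := by
  have hs1 : ContDiff ℝ 1 (deriv γ) := by
    have : ContDiff ℝ (1 + 1) γ := by
      have := contDiff_infty.1 h.smooth 2
      norm_num at this ⊢
      exact this
    exact ((contDiff_succ_iff_deriv (n := 1)).1 this).2.2
  have hd : HasDerivAt (deriv γ) (deriv (deriv γ) u) u :=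
    (hs1.differentiable (by norm_num) u).hasDerivAt
  have hp := aux_pos (h.regular u)
  have hd1 : HasDerivAt (fun t => (deriv γ t).1) (deriv (deriv γ) u).1 u := hd.fst
  have hd2 : HasDerivAt (fun t => (deriv γ t).2) (deriv (deriv γ) u).2 u := hd.snd
  have hv0 : 0 < nrm2 (deriv γ u) := Real.sqrt_pos.2 hp
  have hn : DifferentiableAt ℝ (fun t => (nrm2 (deriv γ t))⁻¹) u := by
    have : DifferentiableAt ℝ (fun t => nrm2 (deriv γ t)) u := by
      have := (((hd1.pow 2).add (hd2.pow 2)).sqrt hp.ne').differentiableAt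
      exact this
    exact this.inv hv0.ne'
  have hT := hn.hasDerivAt.smul hd
  have hT' : deriv (tangentC γ) u = _ := hT.deriv
  unfold curvature arcDeriv normalC
  rw [hT']
  simp only [tangentC, Jrot, dot2, Prod.smul_fst, Prod.smul_snd, Prod.fst_add, Prod.snd_add, smul_eq_mul]
  field_simp
  ring

theorem aux_grad {φ : ℝ → ℝ} (hφ : ContDiffOn ℝ (⊤ : ℕ∞) φ (Set.Ioi 0)) {x : ℝ × ℝ}
    (hx : x ≠ 0) (w : ℝ × ℝ) :
    fderiv ℝ (fun x => φ (nrm2 x)) x w * nrm2 x = deriv φ (nrm2 x) * dot2 x w := by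
  have hp := aux_pos hx
  have hR : 0 < nrm2 x := Real.sqrt_pos.2 hp
  have hφd : HasDerivAt φ (deriv φ (nrm2 x)) (nrm2 x) :=
    ((hφ.contDiffAt (Ioi_mem_nhds hR)).differentiableAt (by simp)).hasDerivAt
  have h1 : HasFDerivAt (fun x : ℝ × ℝ => x.1) (ContinuousLinearMap.fst ℝ ℝ ℝ) x := hasFDerivAt_fst
  have h2 : HasFDerivAt (fun x : ℝ × ℝ => x.2) (ContinuousLinearMap.snd ℝ ℝ ℝ) x := hasFDerivAt_snd
  have h3 := ((h1.pow 2).add (h2.pow 2)).sqrt hp.ne'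
  have h4 : HasFDerivAt nrm2 _ x := h3
  have h5 : HasFDerivAt (fun x => φ (nrm2 x)) _ x := hφd.comp_hasFDerivAt x h4
  rw [h5.fderiv]
  simp [dot2]
  rw [show √(x.1 ^ 2 + x.2 ^ 2) = nrm2 x from rfl]
  field_simp

theorem aux_main (φ : ℝ → ℝ) (hφ : ContDiffOn ℝ (⊤ : ℕ∞) φ (Set.Ioi 0))
    (γ : ℝ → ℝ × ℝ) (R : ℝ) (hc : IsClosedCurve γ) (h0 : ∀ u, γ u ≠ 0)
    (hm : IsPsiMinimal (fun x => φ (nrm2 x)) γ)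
    (hle : ∀ u, nrm2 (γ u) ≤ R) (hex : ∃ u, nrm2 (γ u) = R) :
    deriv φ R ≤ -(1 / R) := by
  obtain ⟨u, hu⟩ := hex
  have hs1 : ContDiff ℝ 1 (deriv γ) := by
    have : ContDiff ℝ (1 + 1) γ := by
      have := contDiff_infty.1 hc.smooth 2
      norm_num at this ⊢
      exact this
    exact ((contDiff_succ_iff_deriv (n := 1)).1 this).2.2
  have hd0 : ∀ t, HasDerivAt γ (deriv γ t) t := fun t =>
    (hc.smooth.differentiable (by simp) t).hasDerivAt
  have hd : HasDerivAt (deriv γ) (deriv (deriv γ) u) u :=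
    (hs1.differentiable (by norm_num) u).hasDerivAt
  have hx : ∀ t, HasDerivAt (fun t => (γ t).1) (deriv γ t).1 t := fun t => (hd0 t).fst
  have hy : ∀ t, HasDerivAt (fun t => (γ t).2) (deriv γ t).2 t := fun t => (hd0 t).snd
  have hp1 : HasDerivAt (fun t => (deriv γ t).1) (deriv (deriv γ) u).1 u := hd.fst
  have hp2 : HasDerivAt (fun t => (deriv γ t).2) (deriv (deriv γ) u).2 u := hd.snd
  have hf : ∀ t, HasDerivAt (fun t => (γ t).1 * (γ t).1 + (γ t).2 * (γ t).2) _ t := fun t =>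
    ((hx t).mul (hx t)).add ((hy t).mul (hy t))
  have hf' : deriv (fun t => (γ t).1 * (γ t).1 + (γ t).2 * (γ t).2) = _ :=
    funext fun t => (hf t).deriv
  have hff := (((hp1.mul (hx u)).add ((hx u).mul hp1)).add ((hp2.mul (hy u)).add ((hy u).mul hp2)))
  have hR : 0 < R := hu ▸ Real.sqrt_pos.2 (aux_pos (h0 u))
  have hsq : ∀ t, nrm2 (γ t) ^ 2 = (γ t).1 ^ 2 + (γ t).2 ^ 2 := fun t =>
    Real.sq_sqrt (by positivity)
  have hmx : ∀ t, (γ t).1 * (γ t).1 + (γ t).2 * (γ t).2 ≤ (γ u).1 * (γ u).1 + (γ u).2 * (γ u).2 := by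
    intro t
    have a := hsq t
    have b := hsq u
    rw [hu] at b
    have c : nrm2 (γ t) ^ 2 ≤ R ^ 2 := pow_le_pow_left₀ (Real.sqrt_nonneg _) (hle t) 2
    nlinarith
  obtain ⟨e1, e2⟩ := aux_second (f := fun t => (γ t).1 * (γ t).1 + (γ t).2 * (γ t).2) (u := u)
    (continuous_iff_continuousAt.2 fun t => (hf t).continuousAt) hmx
  rw [hf'] at e1 e2
  have e3 := hff.deriv
  have e4 : _ ≤ (0:ℝ) := e3 ▸ e2
  have hcv := aux_curv hc u
  have hg := aux_grad hφ (h0 u) (normalC γ u)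
  have hmu := hm u
  unfold psiCurv at hmu
  have hk : curvature γ u = fderiv ℝ (fun x => φ (nrm2 x)) (γ u) (normalC γ u) := by linarith
  rw [← hk, hu] at hg
  have hvp : 0 < nrm2 (deriv γ u) := Real.sqrt_pos.2 (aux_pos (hc.regular u))
  have hv2 : nrm2 (deriv γ u) ^ 2 = (deriv γ u).1 ^ 2 + (deriv γ u).2 ^ 2 :=
    Real.sq_sqrt (by positivity)
  have hR2 := hsq u
  rw [hu] at hR2
  simp only [normalC, tangentC, Jrot, dot2, Prod.smul_fst, Prod.smul_snd, smul_eq_mul] at hg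
  simp only [] at e1 e4
  generalize nrm2 (deriv γ u) = v at *
  generalize curvature γ u = k at *
  generalize (deriv γ u).1 = p at *
  generalize (deriv γ u).2 = q at *
  generalize (deriv (deriv γ) u).1 = a at *
  generalize (deriv (deriv γ) u).2 = b at *
  generalize (γ u).1 = x at *
  generalize (γ u).2 = y at *
  generalize deriv φ R = d at *
  clear hmx hf' hff e2 e3 hp1 hp2
  have g1 : k * R * v = - d * (x * q - y * p) := by
    field_simp at hg
    linarith
  have o : x * p + y * q = 0 := by linarith
  have e5 : x * a + y * b + v ^ 2 ≤ 0 := by rw [hv2]; linarith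
  have c2 : (x * q - y * p) ^ 2 = R ^ 2 * v ^ 2 := by
    rw [hR2, hv2]; linear_combination -(x * p + y * q) * o
  have D : (p * b - q * a) * (x * q - y * p) = - v ^ 2 * (x * a + y * b) := by
    rw [hv2]; linear_combination (b * q + a * p) * o
  have fin : v ^ 2 * (d * R + 1) * v ^ 2 ≤ 0 := by
    have A : R * (p * b - q * a) * (x * q - y * p) = - d * R ^ 2 * v ^ 4 := by
      rw [← hcv]
      linear_combination v ^ 2 * (x * q - y * p) * g1 - d * v ^ 2 * c2
    have B : R * (- v ^ 2 * (x * a + y * b)) = - d * R ^ 2 * v ^ 4 := by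
      rw [← D]; linarith
    have B' : v ^ 2 * (x * a + y * b) = d * R * v ^ 4 := by
      apply mul_left_cancel₀ hR.ne'
      linarith
    nlinarith [mul_nonneg (sq_nonneg v) (neg_nonneg.2 e5)]
  have fin2 : d * R + 1 ≤ 0 := by
    by_contra! hh
    have : 0 < v ^ 2 * (d * R + 1) * v ^ 2 := by positivity
    linarith
  have : d + 1 / R ≤ 0 := by
    have : d + 1 / R = (d * R + 1) / R := by field_simp
    rw [this]
    exact div_nonpos_of_nonpos_of_nonneg fin2 hR.le
  linarith

/-- at the maximal distance R from the origin of a closed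
ψ-minimal curve (ψ radial) one has φ'(R) ≤ −1/R; hence no closed ψ-minimal
curve lies in a punctured disk where φ'(r) > −1/r. -/
theorem psiMinimal_max_radius
    (φ : ℝ → ℝ) (hφ : ContDiffOn ℝ (⊤ : ℕ∞) φ (Set.Ioi 0)) :
    (∀ (γ : ℝ → ℝ × ℝ) (R : ℝ), IsClosedCurve γ → (∀ u, γ u ≠ 0) →
      IsPsiMinimal (fun x => φ (nrm2 x)) γ →
      (∀ u, nrm2 (γ u) ≤ R) → (∃ u, nrm2 (γ u) = R) →
      deriv φ R ≤ -(1 / R))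
    ∧ (∀ R₀ : ℝ, 0 < R₀ → (∀ r : ℝ, 0 < r → r ≤ R₀ → -(1 / r) < deriv φ r) →
        ¬ ∃ γ : ℝ → ℝ × ℝ, IsClosedCurve γ
          ∧ IsPsiMinimal (fun x => φ (nrm2 x)) γ
          ∧ ∀ u, 0 < nrm2 (γ u) ∧ nrm2 (γ u) ≤ R₀) := by
  refine ⟨fun γ R => aux_main φ hφ γ R, ?_⟩
  rintro R₀ hR₀ hd ⟨γ, hc, hm, hb⟩
  have hcont : Continuous fun t => nrm2 (γ t) := by
    have := hc.smooth.continuous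
    unfold nrm2
    fun_prop
  have hper : Function.Periodic (fun t => nrm2 (γ t)) (2 * π) := fun t => by
    simp only [hc.periodic t]
  obtain ⟨u, -, hu⟩ := (isCompact_Icc (a := (0:ℝ)) (b := 2 * π)).exists_isMaxOn
    ⟨0, by simp [Real.pi_pos.le]⟩ hcont.continuousOn
  have hmax : ∀ t, nrm2 (γ t) ≤ nrm2 (γ u) := by
    intro t
    obtain ⟨s, hs, he⟩ := hper.exists_mem_Ico₀ (by positivity) t
    refine he.le.trans ?_
    exact hu ⟨hs.1, hs.2.le⟩
  have h0 : ∀ t, γ t ≠ 0 := by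
    intro t ht
    have := (hb t).1
    rw [ht] at this
    simp [nrm2] at this
  have h1 := aux_main φ hφ γ _ hc h0 hm hmax ⟨u, rfl⟩
  have h2 := hd _ (hb u).1 (hb u).2
  linarith
end
end

section
/- Let ψ(x) = φ(|x|) be a radial density on ℝ²∖{0} and let γ be a closed ψ-minimal plane curve whose image avoids the origin. If ρ = min_u |γ(u)| > 0, then φ′(ρ) ≥ −1/ρ. Consequently, if ρ₀ > 0 and φ′(r) < −1/r for all r ≥ ρ₀, then there is no closed ψ-minimal curve whose image is contained in the region {x : |x| ≥ ρ₀}. -/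
noncomputable section
open Real Set

theorem second_deriv_nonneg_of_min {f g : ℝ → ℝ} {c u : ℝ}
    (hf : ∀ x, HasDerivAt f (g x) x) (hg : HasDerivAt g c u)
    (hmin : ∀ x, f u ≤ f x) : 0 ≤ c := by
  by_contra hc
  push Not at hc
  have hd : deriv f = g := funext fun x => (hf x).deriv
  have hlm : IsLocalMin f u := Filter.Eventually.of_forall hmin
  have h0 : deriv f u = 0 := hlm.deriv_eq_zero
  have h2 : deriv (deriv f) u < 0 := by rw [hd, hg.deriv]; exact hc
  have hM : IsLocalMax f u :=
    isLocalMax_of_deriv_deriv_neg h2 h0 (hf u).continuousAt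
  have he : f =ᶠ[nhds u] fun _ => f u := by
    filter_upwards [hM] with x hx
    exact le_antisymm hx (hmin x)
  have h3 : deriv (deriv f) u = 0 := by
    rw [he.deriv.deriv_eq]; simp
  linarith

theorem fderiv_radial (φ : ℝ → ℝ) (p v : ℝ × ℝ) (hp : 0 < nrm2 p)
    (hφ : DifferentiableAt ℝ φ (nrm2 p)) :
    fderiv ℝ (fun x => φ (nrm2 x)) p v
      = deriv φ (nrm2 p) * ((p.1 * v.1 + p.2 * v.2) / nrm2 p) := by
  have hq : p.1 ^ 2 + p.2 ^ 2 ≠ 0 := by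
    intro h
    unfold nrm2 at hp
    rw [h] at hp; simp at hp
  have h1 : HasFDerivAt (fun x : ℝ × ℝ => x.1) (ContinuousLinearMap.fst ℝ ℝ ℝ) p := hasFDerivAt_fst
  have h2 : HasFDerivAt (fun x : ℝ × ℝ => x.2) (ContinuousLinearMap.snd ℝ ℝ ℝ) p := hasFDerivAt_snd
  have h3 := ((h1.pow 2).add (h2.pow 2)).sqrt hq
  have h4 := HasDerivAt.comp_hasFDerivAt (f := nrm2) p hφ.hasDerivAt h3
  have h5 := h4.fderiv
  have h6 : (φ ∘ nrm2) = fun x => φ (nrm2 x) := rfl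
  rw [h6] at h5
  rw [h5]
  have h7 : √(p.1 ^ 2 + p.2 ^ 2) = nrm2 p := rfl
  simp
  rw [h7]
  field_simp

theorem part_one (φ : ℝ → ℝ) (hφ : ContDiffOn ℝ (⊤ : ℕ∞) φ (Set.Ioi 0))
    (γ : ℝ → ℝ × ℝ) (ρ : ℝ) (hc : IsClosedCurve γ)
    (hm : IsPsiMinimal (fun x => φ (nrm2 x)) γ)
    (hρ : 0 < ρ) (hmin : ∀ u, ρ ≤ nrm2 (γ u)) (u : ℝ) (hu : nrm2 (γ u) = ρ) :
      -(1 / ρ) ≤ deriv φ ρ := by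
  have hdφ : DifferentiableAt ℝ φ ρ :=
    (hφ.contDiffAt (Ioi_mem_nhds hρ)).differentiableAt (by simp)
  have hγ : ∀ x, HasDerivAt γ (deriv γ x) x := fun x =>
    (hc.smooth.differentiable (by simp) x).hasDerivAt
  have hs' : ContDiff ℝ (⊤ : ℕ∞) (deriv γ) :=
    ((contDiff_infty_iff_deriv (f := γ)).1 hc.smooth).2
  have hγ' : ∀ x, HasDerivAt (deriv γ) (deriv (deriv γ) x) x := fun x =>
    (hs'.differentiable (by simp) x).hasDerivAt
  have ha : ∀ x, HasDerivAt (fun x => (γ x).1) ((deriv γ x).1) x := fun x =>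
    (ContinuousLinearMap.fst ℝ ℝ ℝ).hasFDerivAt.comp_hasDerivAt x (hγ x)
  have hb : ∀ x, HasDerivAt (fun x => (γ x).2) ((deriv γ x).2) x := fun x =>
    (ContinuousLinearMap.snd ℝ ℝ ℝ).hasFDerivAt.comp_hasDerivAt x (hγ x)
  have ha' : ∀ x, HasDerivAt (fun x => (deriv γ x).1) ((deriv (deriv γ) x).1) x := fun x =>
    (ContinuousLinearMap.fst ℝ ℝ ℝ).hasFDerivAt.comp_hasDerivAt x (hγ' x)
  have hb' : ∀ x, HasDerivAt (fun x => (deriv γ x).2) ((deriv (deriv γ) x).2) x := fun x =>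
    (ContinuousLinearMap.snd ℝ ℝ ℝ).hasFDerivAt.comp_hasDerivAt x (hγ' x)
  have hf : ∀ x, HasDerivAt (fun x => (γ x).1 ^ 2 + (γ x).2 ^ 2)
      (2 * ((γ x).1 * (deriv γ x).1 + (γ x).2 * (deriv γ x).2)) x := by
    intro x
    exact (((ha x).pow 2).add ((hb x).pow 2)).congr_deriv (by push_cast; ring)
  have hg := (((ha u).mul (ha' u)).add ((hb u).mul (hb' u))).const_mul 2
  have hrho : (γ u).1 ^ 2 + (γ u).2 ^ 2 = ρ ^ 2 := by
    rw [← hu, nrm2, Real.sq_sqrt (by positivity)]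
  have hmn : ∀ x, (γ u).1 ^ 2 + (γ u).2 ^ 2 ≤ (γ x).1 ^ 2 + (γ x).2 ^ 2 := by
    intro x
    have h1 : (γ x).1 ^ 2 + (γ x).2 ^ 2 = nrm2 (γ x) ^ 2 := by
      rw [nrm2, Real.sq_sqrt (by positivity)]
    rw [hrho, h1]
    exact pow_le_pow_left₀ hρ.le (hmin x) 2
  have hsec := second_deriv_nonneg_of_min hf hg hmn
  have hfirst : 2 * ((γ u).1 * (deriv γ u).1 + (γ u).2 * (deriv γ u).2) = 0 :=
    IsLocalMin.hasDerivAt_eq_zero (Filter.Eventually.of_forall hmn) (hf u)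
  have hreg : (deriv γ u).1 ^ 2 + (deriv γ u).2 ^ 2 ≠ 0 := by
    intro h
    apply hc.regular u
    ext
    · simp; nlinarith [sq_nonneg (deriv γ u).1, sq_nonneg (deriv γ u).2]
    · simp; nlinarith [sq_nonneg (deriv γ u).1, sq_nonneg (deriv γ u).2]
  have hnn : nrm2 (deriv γ u) ^ 2 = (deriv γ u).1 ^ 2 + (deriv γ u).2 ^ 2 := by
    rw [nrm2, Real.sq_sqrt (by positivity)]
  have hnpos : 0 < nrm2 (deriv γ u) := by
    unfold nrm2
    exact Real.sqrt_pos.2 (lt_of_le_of_ne (by positivity) hreg.symm)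
  have hnd : ∃ m, HasDerivAt (fun x => (nrm2 (deriv γ x))⁻¹) m u :=
    ⟨_, ((((ha' u).pow 2).add ((hb' u).pow 2)).sqrt hreg).inv hnpos.ne'⟩
  obtain ⟨m, hmd⟩ := hnd
  have hT : deriv (tangentC γ) u
      = (nrm2 (deriv γ u))⁻¹ • deriv (deriv γ) u + m • deriv γ u :=
    (hmd.smul (hγ' u)).deriv
  have hk := hm u
  unfold psiCurv at hk
  rw [fderiv_radial φ _ _ (by rw [hu]; exact hρ) (by rw [hu]; exact hdφ), hu] at hk
  simp only [curvature, arcDeriv, hT, normalC, tangentC, Jrot, dot2, Prod.smul_fst, Prod.smul_snd,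
    Prod.fst_add, Prod.snd_add, smul_eq_mul] at hk
  generalize nrm2 (deriv γ u) = n at *
  generalize deriv φ ρ = d at *
  generalize (deriv (deriv γ) u).1 = a2 at *
  generalize (deriv (deriv γ) u).2 = b2 at *
  generalize (deriv γ u).1 = a1 at *
  generalize (deriv γ u).2 = b1 at *
  generalize (γ u).1 = a at *
  generalize (γ u).2 = b at *
  have hor : a * a1 + b * b1 = 0 := by linarith
  have e1 : (a1 * b2 - a2 * b1) * ρ = d * n ^ 2 * (a1 * b - a * b1) := by
    field_simp at hk
    linear_combination hk
  have hw : (a1 * b - a * b1) ^ 2 = ρ ^ 2 * n ^ 2 := by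
    rw [hnn, ← hrho]; linear_combination (-(a * a1 + b * b1)) * hor
  have hq : (a1 * b2 - a2 * b1) * (a1 * b - a * b1) = n ^ 2 * (a * a2 + b * b2) := by
    rw [hnn]; linear_combination (-(a1 * a2 + b1 * b2)) * hor
  have e2 : (n ^ 2 * ρ) * (a * a2 + b * b2) = (n ^ 2 * ρ) * (d * ρ * n ^ 2) := by
    linear_combination (a1 * b - a * b1) * e1 - ρ * hq + d * n ^ 2 * hw
  have e3 := mul_left_cancel₀ (by positivity) e2
  have e4 : 0 ≤ n ^ 2 * (1 + d * ρ) := by nlinarith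
  have e5 : 0 ≤ 1 + d * ρ := nonneg_of_mul_nonneg_right e4 (by positivity)
  rw [neg_le_iff_add_nonneg, show d + 1 / ρ = (1 + d * ρ) / ρ by field_simp; ring]
  positivity

/-- at the minimal distance ρ from the origin of a closed
ψ-minimal curve (ψ radial) one has φ'(ρ) ≥ −1/ρ; hence no closed ψ-minimal
curve lies in the region |x| ≥ ρ₀ where φ'(r) < −1/r. -/
theorem psiMinimal_min_radius
    (φ : ℝ → ℝ) (hφ : ContDiffOn ℝ (⊤ : ℕ∞) φ (Set.Ioi 0)) :
    (∀ (γ : ℝ → ℝ × ℝ) (ρ : ℝ), IsClosedCurve γ → (∀ u, γ u ≠ 0) →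
      IsPsiMinimal (fun x => φ (nrm2 x)) γ →
      0 < ρ → (∀ u, ρ ≤ nrm2 (γ u)) → (∃ u, nrm2 (γ u) = ρ) →
      -(1 / ρ) ≤ deriv φ ρ)
    ∧ (∀ ρ₀ : ℝ, 0 < ρ₀ → (∀ r : ℝ, ρ₀ ≤ r → deriv φ r < -(1 / r)) →
        ¬ ∃ γ : ℝ → ℝ × ℝ, IsClosedCurve γ
          ∧ IsPsiMinimal (fun x => φ (nrm2 x)) γ
          ∧ ∀ u, ρ₀ ≤ nrm2 (γ u)) := by
  refine ⟨?_, ?_⟩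
  · rintro γ ρ hc - hm hρ hmin ⟨u, hu⟩
    exact part_one φ hφ γ ρ hc hm hρ hmin u hu
  · rintro ρ₀ h0 hd ⟨γ, hc, hm, hge⟩
    have hcont : Continuous fun u => nrm2 (γ u) := by
      have := hc.smooth.continuous
      unfold nrm2
      fun_prop
    obtain ⟨u, -, hu⟩ := (isCompact_Icc (a := (0:ℝ)) (b := 2 * π)).exists_isMinOn
      ⟨0, by simp; positivity⟩ hcont.continuousOn
    have hmin : ∀ x, nrm2 (γ u) ≤ nrm2 (γ x) := by
      intro x
      obtain ⟨y, hy, hxy⟩ := hc.periodic.exists_mem_Ico₀ (by positivity) x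
      rw [hxy]
      exact hu (Ico_subset_Icc_self hy)
    have h1 := part_one φ hφ γ (nrm2 (γ u)) hc hm (h0.trans_le (hge u)) hmin u rfl
    have h2 := hd _ (hge u)
    linarith
end
end

section
/- Let ψ(x) = φ(|x|) be a radial density on ℝ²∖{0} and let γ be a closed ψ-minimal plane curve whose image is contained in ℝ²∖{0}. Then γ is starshaped with respect to the origin, that is, ⟨γ(u), N(u)⟩ ≠ 0 for every u. (The proof uses that every straight line through the origin is ψ-minimal for a radial density, together with uniqueness for the second-order ODE satisfied by ψ-minimal curves.) -/
noncomputable section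
open Real Set

theorem aux_sq_pos (p : ℝ × ℝ) (hp : p ≠ 0) : 0 < p.1 ^ 2 + p.2 ^ 2 := by
  rcases eq_or_ne p.1 0 with h1 | h1
  · have h2 : p.2 ≠ 0 := fun h2 => hp (Prod.ext h1 h2)
    positivity
  · positivity

theorem aux_fderiv (φ : ℝ → ℝ) (hφ : ContDiffOn ℝ (⊤ : ℕ∞) φ (Set.Ioi 0))
    (p : ℝ × ℝ) (hp : p ≠ 0) :
    ∃ c : ℝ, DifferentiableAt ℝ (fun x : ℝ × ℝ => φ (nrm2 x)) p ∧
      ∀ w, fderiv ℝ (fun x : ℝ × ℝ => φ (nrm2 x)) p w = c * dot2 p w := by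
  have hq := aux_sq_pos p hp
  have hr : 0 < nrm2 p := Real.sqrt_pos.2 hq
  have hd : DifferentiableAt ℝ φ (nrm2 p) :=
    (hφ.differentiableOn (by simp)).differentiableAt (Ioi_mem_nhds hr)
  have h1 : HasFDerivAt (fun x : ℝ × ℝ => x.1) (ContinuousLinearMap.fst ℝ ℝ ℝ) p := hasFDerivAt_fst
  have h2 : HasFDerivAt (fun x : ℝ × ℝ => x.2) (ContinuousLinearMap.snd ℝ ℝ ℝ) p := hasFDerivAt_snd
  have h3 := ((h1.pow 2).add (h2.pow 2)).sqrt hq.ne'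
  have h4 := hd.hasDerivAt.comp_hasFDerivAt p (f := nrm2) h3
  refine ⟨deriv φ (nrm2 p) / nrm2 p, h4.differentiableAt, fun w => ?_⟩
  have h5 : fderiv ℝ (fun x : ℝ × ℝ => φ (nrm2 x)) p = _ := h4.fderiv
  rw [h5]
  have : √(p.1 ^ 2 + p.2 ^ 2) = nrm2 p := rfl
  simp [this, dot2]
  field_simp

/-- a closed ψ-minimal curve avoiding the origin, with ψ a radial
density, is starshaped with respect to the origin. -/
theorem psiMinimal_starshaped
    (φ : ℝ → ℝ) (hφ : ContDiffOn ℝ (⊤ : ℕ∞) φ (Set.Ioi 0))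
    (γ : ℝ → ℝ × ℝ) (hγ : IsClosedCurve γ) (havoid : ∀ u, γ u ≠ 0)
    (hmin : IsPsiMinimal (fun x => φ (nrm2 x)) γ) :
    ∀ u : ℝ, dot2 (γ u) (normalC γ u) ≠ 0 := by
  have hv : ∀ u, 0 < nrm2 (deriv γ u) := fun u =>
    Real.sqrt_pos.2 (aux_sq_pos _ (hγ.regular u))
  have hγd : Differentiable ℝ γ := hγ.smooth.differentiable (by simp)
  have hγ' : ContDiff ℝ (⊤ : ℕ∞) (deriv γ) := by
    have := hγ.smooth
    rw [contDiff_infty_iff_deriv] at this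
    exact this.2
  have hγ'd : Differentiable ℝ (deriv γ) := hγ'.differentiable (by simp)
  have hTd : Differentiable ℝ (tangentC γ) := by
    intro u
    have hn : DifferentiableAt ℝ (fun u => nrm2 (deriv γ u)) u := by
      unfold nrm2
      have := aux_sq_pos _ (hγ.regular u)
      exact (((hγ'd u).fst.pow 2).add ((hγ'd u).snd.pow 2)).sqrt this.ne'
    exact (hn.inv (hv u).ne').smul (hγ'd u)
  have hT1 : ∀ u, (tangentC γ u).1 ^ 2 + (tangentC γ u).2 ^ 2 = 1 := by
    intro u
    have h1 := hv u
    have h2 : nrm2 (deriv γ u) ^ 2 = (deriv γ u).1 ^ 2 + (deriv γ u).2 ^ 2 :=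
      Real.sq_sqrt (by positivity)
    simp only [tangentC, Prod.smul_fst, Prod.smul_snd, smul_eq_mul]
    field_simp
    linarith
  have hx : ∀ u, HasDerivAt (fun u => (γ u).1) (deriv γ u).1 u := fun u => (hγd u).hasDerivAt.fst
  have hy : ∀ u, HasDerivAt (fun u => (γ u).2) (deriv γ u).2 u := fun u => (hγd u).hasDerivAt.snd
  have ha : ∀ u, HasDerivAt (fun u => (tangentC γ u).1) (deriv (tangentC γ) u).1 u :=
    fun u => (hTd u).hasDerivAt.fst
  have hb : ∀ u, HasDerivAt (fun u => (tangentC γ u).2) (deriv (tangentC γ) u).2 u :=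
    fun u => (hTd u).hasDerivAt.snd
  have horth : ∀ u, (tangentC γ u).1 * (deriv (tangentC γ) u).1
      + (tangentC γ u).2 * (deriv (tangentC γ) u).2 = 0 := by
    intro u
    have h1 := ((ha u).pow 2).add ((hb u).pow 2)
    have h2 : HasDerivAt (fun _ : ℝ => (1:ℝ)) 0 u := hasDerivAt_const _ _
    have h3 := h1.unique (h2.congr_of_eventuallyEq (Filter.Eventually.of_forall hT1))
    simp at h3
    linarith
  have hgT : ∀ u, (deriv γ u).1 = nrm2 (deriv γ u) * (tangentC γ u).1 ∧
      (deriv γ u).2 = nrm2 (deriv γ u) * (tangentC γ u).2 := by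
    intro u
    have h1 := hv u
    simp only [tangentC, Prod.smul_fst, Prod.smul_snd, smul_eq_mul]
    constructor <;> field_simp
  -- Clairaut first integral
  have hF : ∀ u, HasDerivAt (fun u => Real.exp (φ (nrm2 (γ u))) *
      (-((γ u).1 * (tangentC γ u).2) + (γ u).2 * (tangentC γ u).1)) 0 u := by
    intro u
    obtain ⟨c, hc1, hc2⟩ := aux_fderiv φ hφ (γ u) (havoid u)
    have hG : HasDerivAt (fun u => φ (nrm2 (γ u))) (c * dot2 (γ u) (deriv γ u)) u := by
      rw [← hc2]
      exact hc1.hasFDerivAt.comp_hasDerivAt u (hγd u).hasDerivAt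
    have hm := hmin u
    simp only [psiCurv, hc2] at hm
    have h := hG.exp.mul (((hx u).mul (hb u)).neg.add ((hy u).mul (ha u)))
    refine h.congr_deriv ?_
    have hv0 := hv u
    have ho := horth u
    have ht := hT1 u
    obtain ⟨g1, g2⟩ := hgT u
    simp only [curvature, arcDeriv, normalC, Jrot, dot2, Prod.smul_fst, Prod.smul_snd,
      smul_eq_mul] at hm
    simp only [dot2, Pi.add_apply, Pi.neg_apply, Pi.mul_apply]
    rw [g1, g2]
    generalize nrm2 (deriv γ u) = v at *
    generalize (tangentC γ u).1 = a at *
    generalize (tangentC γ u).2 = b at *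
    generalize (deriv (tangentC γ) u).1 = a' at *
    generalize (deriv (tangentC γ) u).2 = b' at *
    generalize (γ u).1 = x at *
    generalize (γ u).2 = y at *
    have hk : -a' * b + b' * a = v * (c * (-x * b + y * a)) := by
      field_simp at hm
      linarith
    have e1 : a' = -b * (v * (c * (-x * b + y * a))) := by
      linear_combination (-b) * hk + a * ho - a' * ht
    have e2 : b' = a * (v * (c * (-x * b + y * a))) := by
      linear_combination a * hk + b * ho - b' * ht
    rw [e1, e2]
    ring
  intro u₀ h0
  have hzero : ∀ u, -((γ u).1 * (tangentC γ u).2) + (γ u).2 * (tangentC γ u).1 = 0 := by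
    intro u
    have := is_const_of_deriv_eq_zero (fun u => (hF u).differentiableAt)
      (fun u => (hF u).deriv) u u₀
    have h1 : -((γ u₀).1 * (tangentC γ u₀).2) + (γ u₀).2 * (tangentC γ u₀).1 = 0 := by
      rw [← h0]; simp [dot2, normalC, Jrot]
    simp only [h1, mul_zero] at this
    exact (mul_eq_zero.1 this).resolve_left (Real.exp_pos _).ne'
  -- maximum of the squared radius
  have hcont : Continuous (fun u => (γ u).1 ^ 2 + (γ u).2 ^ 2) := by
    have := hγd.continuous
    fun_prop
  obtain ⟨m, -, hmax⟩ := isCompact_Icc.exists_isMaxOn (s := Set.Icc 0 (2 * π))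
    ⟨0, by constructor <;> positivity⟩ hcont.continuousOn
  have hmax' : ∀ u, (γ u).1 ^ 2 + (γ u).2 ^ 2 ≤ (γ m).1 ^ 2 + (γ m).2 ^ 2 := by
    intro u
    obtain ⟨w, hw, he⟩ := hγ.periodic.exists_mem_Ico₀ (by positivity) u
    rw [he]
    exact hmax ⟨hw.1, hw.2.le⟩
  have hloc : IsLocalMax (fun u => (γ u).1 ^ 2 + (γ u).2 ^ 2) m :=
    Filter.Eventually.of_forall hmax'
  have hd0 := hloc.hasDerivAt_eq_zero (((hx m).pow 2).add ((hy m).pow 2))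
  obtain ⟨g1, g2⟩ := hgT m
  rw [g1, g2] at hd0
  have hz := hzero m
  have ht := hT1 m
  have hp := aux_sq_pos _ (havoid m)
  have hdot : (γ m).1 * (tangentC γ m).1 + (γ m).2 * (tangentC γ m).2 = 0 := by
    have : nrm2 (deriv γ m) * ((γ m).1 * (tangentC γ m).1 + (γ m).2 * (tangentC γ m).2) = 0 := by
      simp at hd0
      linarith
    exact (mul_eq_zero.1 this).resolve_left (hv m).ne'
  have : (γ m).1 ^ 2 + (γ m).2 ^ 2 = 0 := by
    generalize (tangentC γ m).1 = a at *
    generalize (tangentC γ m).2 = b at *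
    linear_combination (-((γ m).1 ^ 2 + (γ m).2 ^ 2)) * ht
      + ((γ m).1 * a + (γ m).2 * b) * hdot + (-((γ m).1 * b) + (γ m).2 * a) * hz
  linarith
end
end

section
/- Let γ: ℝ × (−ε, ε) → ℝ² be a smooth family of closed plane curves with ∂_t γ = f N for a smooth function f(u,t), let ψ be smooth on an open set containing all the images, and suppose the initial curve γ(·,0) is ψ-minimal. Then the second variation of the ψ-length is d²/dt² L_ψ |_{t=0} = ∫₀^{2π} [ (∂_s f)² − f² ( k² − (Hess ψ)(γ)(N,N) ) ] e^{ψ(γ)} |∂_u γ| du, where all quantities on the right are evaluated at t = 0 and (Hess ψ)(γ)(N,N) denotes the second derivative of ψ at γ(u,0) in the direction N. -/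
noncomputable section
open Real Set

def strip (ε : ℝ) : Set (ℝ × ℝ) := {p | p.1 ∈ Set.Ioo (-ε) ε}

theorem strip_open (ε : ℝ) : IsOpen (strip ε) := isOpen_Ioo.preimage continuous_fst

def Sm (S : Set (ℝ × ℝ)) (F : ℝ × ℝ → ℝ) : Prop := ContDiffOn ℝ (⊤ : ℕ∞) F S

def DD (v : ℝ × ℝ) (F : ℝ × ℝ → ℝ) (p : ℝ × ℝ) : ℝ := fderiv ℝ F p v

theorem Sm.dAt {S : Set (ℝ × ℝ)} (hS : IsOpen S) {F : ℝ × ℝ → ℝ} (hF : Sm S F) {p : ℝ × ℝ}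
    (hp : p ∈ S) : DifferentiableAt ℝ F p :=
  (hF.contDiffAt (hS.mem_nhds hp)).differentiableAt (by simp)

theorem Sm.dd {S : Set (ℝ × ℝ)} (hS : IsOpen S) {F : ℝ × ℝ → ℝ} (hF : Sm S F) (v : ℝ × ℝ) :
    Sm S (DD v F) :=
  (ContDiffOn.fderiv_of_isOpen (m := (⊤ : ℕ∞)) hF hS (by exact_mod_cast le_rfl)).clm_apply contDiffOn_const

theorem Sm.mul {S : Set (ℝ × ℝ)} {F G : ℝ × ℝ → ℝ} (hF : Sm S F) (hG : Sm S G) :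
    Sm S (fun p => F p * G p) := ContDiffOn.mul hF hG

theorem Sm.sub {S : Set (ℝ × ℝ)} {F G : ℝ × ℝ → ℝ} (hF : Sm S F) (hG : Sm S G) :
    Sm S (fun p => F p - G p) := ContDiffOn.sub hF hG

theorem Sm.neg {S : Set (ℝ × ℝ)} {F : ℝ × ℝ → ℝ} (hF : Sm S F) :
    Sm S (fun p => - F p) := ContDiffOn.neg hF

theorem Sm.div {S : Set (ℝ × ℝ)} {F G : ℝ × ℝ → ℝ} (hF : Sm S F) (hG : Sm S G)
    (h : ∀ p ∈ S, G p ≠ 0) :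
    Sm S (fun p => F p / G p) := ContDiffOn.div hF hG h

theorem Sm.congr {S : Set (ℝ × ℝ)} {F G : ℝ × ℝ → ℝ} (hF : Sm S F) (h : ∀ p ∈ S, G p = F p) :
    Sm S G := ContDiffOn.congr hF h

theorem DD_mul {S : Set (ℝ × ℝ)} (hS : IsOpen S) {F G : ℝ × ℝ → ℝ} (hF : Sm S F) (hG : Sm S G)
    (v : ℝ × ℝ) {p : ℝ × ℝ} (hp : p ∈ S) :
    DD v (fun p => F p * G p) p = DD v F p * G p + F p * DD v G p := by
  unfold DD
  rw [fderiv_fun_mul (hF.dAt hS hp) (hG.dAt hS hp)]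
  simp; ring

theorem DD_sub {S : Set (ℝ × ℝ)} (hS : IsOpen S) {F G : ℝ × ℝ → ℝ} (hF : Sm S F) (hG : Sm S G)
    (v : ℝ × ℝ) {p : ℝ × ℝ} (hp : p ∈ S) :
    DD v (fun p => F p - G p) p = DD v F p - DD v G p := by
  unfold DD
  rw [fderiv_fun_sub (hF.dAt hS hp) (hG.dAt hS hp)]
  simp

theorem DD_neg {F : ℝ × ℝ → ℝ} (v : ℝ × ℝ) {p : ℝ × ℝ} :
    DD v (fun p => - F p) p = - DD v F p := by
  unfold DD
  rw [fderiv_fun_neg]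
  simp

theorem DD_const (a : ℝ) (v : ℝ × ℝ) {p : ℝ × ℝ} :
    DD v (fun _ => a) p = 0 := by
  unfold DD
  simp

theorem DD_congr {S : Set (ℝ × ℝ)} (hS : IsOpen S) {F G : ℝ × ℝ → ℝ} (h : ∀ p ∈ S, F p = G p)
    (v : ℝ × ℝ) {p : ℝ × ℝ} (hp : p ∈ S) : DD v F p = DD v G p := by
  unfold DD
  rw [Filter.EventuallyEq.fderiv_eq]
  filter_upwards [hS.mem_nhds hp] with a ha using h a ha

theorem DD_DD {S : Set (ℝ × ℝ)} (hS : IsOpen S) {F : ℝ × ℝ → ℝ} (hF : Sm S F)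
    (v w : ℝ × ℝ) {p : ℝ × ℝ} (hp : p ∈ S) :
    DD v (DD w F) p = fderiv ℝ (fderiv ℝ F) p v w := by
  have h1 : DifferentiableAt ℝ (fderiv ℝ F) p :=
    ((ContDiffOn.fderiv_of_isOpen (m := (⊤ : ℕ∞)) hF hS (by exact_mod_cast le_rfl)).contDiffAt
      (hS.mem_nhds hp)).differentiableAt (by simp)
  have h2 := h1.hasFDerivAt.clm_apply (hasFDerivAt_const w p)
  have h3 : fderiv ℝ (DD w F) p = _ := h2.fderiv
  unfold DD at *
  rw [h3]; simp

theorem DD_comm {S : Set (ℝ × ℝ)} (hS : IsOpen S) {F : ℝ × ℝ → ℝ} (hF : Sm S F)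
    (v w : ℝ × ℝ) {p : ℝ × ℝ} (hp : p ∈ S) :
    DD v (DD w F) p = DD w (DD v F) p := by
  rw [DD_DD hS hF v w hp, DD_DD hS hF w v hp]
  exact (hF.contDiffAt (hS.mem_nhds hp)).isSymmSndFDerivAt (by simpa using (WithTop.coe_le_coe.2 (le_top : (2:ℕ∞) ≤ ⊤))) v w

theorem Sm.hasDerivAt_fst {S : Set (ℝ × ℝ)} (hS : IsOpen S) {F : ℝ × ℝ → ℝ} (hF : Sm S F)
    {t u : ℝ} (hp : (t, u) ∈ S) :
    HasDerivAt (fun τ => F (τ, u)) (DD (1, 0) F (t, u)) t := by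
  have h := (hF.dAt hS hp).hasFDerivAt.comp_hasDerivAt t
    ((hasDerivAt_id t).prodMk (hasDerivAt_const t u))
  exact h

theorem Sm.hasDerivAt_snd {S : Set (ℝ × ℝ)} (hS : IsOpen S) {F : ℝ × ℝ → ℝ} (hF : Sm S F)
    {t u : ℝ} (hp : (t, u) ∈ S) :
    HasDerivAt (fun τ => F (t, τ)) (DD (0, 1) F (t, u)) u := by
  have h := (hF.dAt hS hp).hasFDerivAt.comp_hasDerivAt u
    ((hasDerivAt_const u t).prodMk (hasDerivAt_id u))
  exact h

theorem frame_core {S : Set (ℝ × ℝ)} (hS : IsOpen S) {x y q c s f κ : ℝ × ℝ → ℝ}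
    (hx : Sm S x) (hy : Sm S y) (hq : Sm S q) (hc : Sm S c) (hs : Sm S s) (hf : Sm S f)
    (hq0 : ∀ p ∈ S, q p ≠ 0)
    (h1 : ∀ p ∈ S, c p * c p + s p * s p = 1)
    (xu : ∀ p ∈ S, DD (0, 1) x p = q p * c p)
    (yu : ∀ p ∈ S, DD (0, 1) y p = q p * s p)
    (xt : ∀ p ∈ S, DD (1, 0) x p = - (f p * s p))
    (yt : ∀ p ∈ S, DD (1, 0) y p = f p * c p)
    (hκ : ∀ p ∈ S, κ p = c p * DD (0, 1) s p - s p * DD (0, 1) c p) :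
    ∀ p ∈ S, DD (1, 0) q p = - (f p * κ p) ∧
      DD (1, 0) c p = - (DD (0, 1) f p / q p * s p) ∧
      DD (1, 0) s p = DD (0, 1) f p / q p * c p ∧
      DD (1, 0) κ p = DD (0, 1) (fun p => DD (0, 1) f p / q p) p := by
  have h1v : ∀ v, ∀ p ∈ S, c p * DD v c p + s p * DD v s p = 0 := by
    intro v p hp
    have e := DD_congr hS (G := fun p => 1 - s p * s p) (F := fun p => c p * c p)
      (fun p hp => by linarith [h1 p hp]) v hp
    have e2 := DD_sub hS (F := fun _ => (1:ℝ)) contDiffOn_const (hs.mul hs) v hp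
    rw [DD_mul hS hc hc v hp] at e
    rw [DD_const, DD_mul hS hs hs v hp] at e2
    rw [e2] at e
    linarith
  have cu : ∀ p ∈ S, DD (0, 1) c p = - (κ p * s p) := by
    intro p hp
    rw [hκ p hp]
    linear_combination (-DD (0, 1) c p) * h1 p hp + c p * h1v (0, 1) p hp
  have su : ∀ p ∈ S, DD (0, 1) s p = κ p * c p := by
    intro p hp
    rw [hκ p hp]
    linear_combination (-DD (0, 1) s p) * h1 p hp + s p * h1v (0, 1) p hp
  have ex : ∀ p ∈ S, DD (1, 0) q p * c p + q p * DD (1, 0) c p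
      = - (DD (0, 1) f p * s p + f p * DD (0, 1) s p) := by
    intro p hp
    have e := DD_comm hS hx (1, 0) (0, 1) hp
    rwa [DD_congr hS xu _ hp, DD_congr hS xt _ hp, DD_mul hS hq hc _ hp, DD_neg,
      DD_mul hS hf hs _ hp] at e
  have ey : ∀ p ∈ S, DD (1, 0) q p * s p + q p * DD (1, 0) s p
      = DD (0, 1) f p * c p + f p * DD (0, 1) c p := by
    intro p hp
    have e := DD_comm hS hy (1, 0) (0, 1) hp
    rwa [DD_congr hS yu _ hp, DD_congr hS yt _ hp, DD_mul hS hq hs _ hp,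
      DD_mul hS hf hc _ hp] at e
  have qt : ∀ p ∈ S, DD (1, 0) q p = - (f p * κ p) := by
    intro p hp
    have a := ex p hp
    have b := ey p hp
    rw [su p hp] at a
    rw [cu p hp] at b
    linear_combination (-DD (1, 0) q p - f p * κ p) * h1 p hp + c p * a + s p * b
      - q p * h1v (1, 0) p hp
  have ct : ∀ p ∈ S, DD (1, 0) c p = - (DD (0, 1) f p / q p * s p) := by
    intro p hp
    have a := ex p hp
    rw [su p hp, qt p hp] at a
    have := hq0 p hp
    field_simp
    linarith
  have st : ∀ p ∈ S, DD (1, 0) s p = DD (0, 1) f p / q p * c p := by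
    intro p hp
    have a := ey p hp
    rw [cu p hp, qt p hp] at a
    have := hq0 p hp
    field_simp
    linarith
  have hω : Sm S (fun p => DD (0, 1) f p / q p) := (hf.dd hS _).div hq hq0
  intro p hp
  refine ⟨qt p hp, ct p hp, st p hp, ?_⟩
  have cut : DD (1, 0) (DD (0, 1) c) p = _ := DD_comm hS hc (1, 0) (0, 1) hp
  have sut : DD (1, 0) (DD (0, 1) s) p = _ := DD_comm hS hs (1, 0) (0, 1) hp
  rw [DD_congr hS ct _ hp, DD_neg, DD_mul hS hω hs _ hp, su p hp] at cut
  rw [DD_congr hS st _ hp, DD_mul hS hω hc _ hp, cu p hp] at sut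
  rw [DD_congr hS hκ _ hp, DD_sub hS (hc.mul (hs.dd hS _)) (hs.mul (hc.dd hS _)) _ hp,
    DD_mul hS hc (hs.dd hS _) _ hp, DD_mul hS hs (hc.dd hS _) _ hp, cut, sut, cu p hp, su p hp,
    ct p hp, st p hp]
  linear_combination (DD (0, 1) (fun p => DD (0, 1) f p / q p) p) * h1 p hp

theorem param_int {ε : ℝ} {F : ℝ × ℝ → ℝ} (hF : Sm (strip ε) F) {a b t : ℝ}
    (ht : t ∈ Set.Ioo (-ε) ε) :
    HasDerivAt (fun τ => ∫ u in a..b, F (τ, u)) (∫ u in a..b, DD (1, 0) F (t, u)) t := by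
  have hS := strip_open ε
  have hF' : Sm (strip ε) (DD (1, 0) F) := hF.dd hS _
  obtain ⟨r, hr, hrs⟩ := Metric.nhds_basis_closedBall.mem_iff.1 (Ioo_mem_nhds ht.1 ht.2)
  have hK : IsCompact (Metric.closedBall t r ×ˢ Set.uIcc a b) :=
    (isCompact_closedBall t r).prod isCompact_uIcc
  have hKS : Metric.closedBall t r ×ˢ Set.uIcc a b ⊆ strip ε := fun p hp => hrs hp.1
  obtain ⟨C, hC⟩ := hK.exists_bound_of_continuousOn (hF'.continuousOn.mono hKS)
  have cont : ∀ {G : ℝ × ℝ → ℝ}, Sm (strip ε) G → ∀ τ ∈ Set.Ioo (-ε) ε,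
      Continuous (fun u => G (τ, u)) := fun hG τ hτ =>
    hG.continuousOn.comp_continuous (by fun_prop) (fun u => hτ)
  refine (intervalIntegral.hasDerivAt_integral_of_dominated_loc_of_deriv_le
    (F := fun τ u => F (τ, u)) (F' := fun τ u => DD (1, 0) F (τ, u)) (bound := fun _ => C)
    (Metric.closedBall_mem_nhds t hr) ?_ ?_ ?_ ?_ ?_ ?_).2
  · filter_upwards [Ioo_mem_nhds ht.1 ht.2] with τ hτ
    exact (cont hF τ hτ).aestronglyMeasurable
  · exact (cont hF t ht).intervalIntegrable _ _
  · exact (cont hF' t ht).aestronglyMeasurable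
  · refine MeasureTheory.ae_of_all _ fun u hu τ hτ => hC (τ, u) ⟨hτ, Set.uIoc_subset_uIcc hu⟩
  · exact intervalIntegrable_const
  · exact MeasureTheory.ae_of_all _ fun u hu τ hτ => hF.hasDerivAt_fst hS (hrs hτ)

theorem frame_core2 {S : Set (ℝ × ℝ)} (hS : IsOpen S)
    {x y q c s f κ Φ A B P11 P12 P21 P22 : ℝ × ℝ → ℝ}
    (hx : Sm S x) (hy : Sm S y) (hq : Sm S q) (hc : Sm S c) (hs : Sm S s) (hf : Sm S f)
    (hq0 : ∀ p ∈ S, q p ≠ 0)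
    (h1 : ∀ p ∈ S, c p * c p + s p * s p = 1)
    (xu : ∀ p ∈ S, DD (0, 1) x p = q p * c p)
    (yu : ∀ p ∈ S, DD (0, 1) y p = q p * s p)
    (xt : ∀ p ∈ S, DD (1, 0) x p = - (f p * s p))
    (yt : ∀ p ∈ S, DD (1, 0) y p = f p * c p)
    (hκ : ∀ p ∈ S, κ p = c p * DD (0, 1) s p - s p * DD (0, 1) c p)
    (sΦ : Sm S Φ) (sA : Sm S A) (sB : Sm S B)
    (hΦ : ∀ v, ∀ p ∈ S, DD v Φ p = Φ p * (A p * DD v x p + B p * DD v y p))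
    (hA : ∀ v, ∀ p ∈ S, DD v A p = P11 p * DD v x p + P21 p * DD v y p)
    (hB : ∀ v, ∀ p ∈ S, DD v B p = P12 p * DD v x p + P22 p * DD v y p)
    {p : ℝ × ℝ} (hp : p ∈ S) (hmin : q p * (B p * c p - A p * s p) = κ p) :
    DD (1, 0) (DD (1, 0) (fun p => Φ p * q p)) p =
      ((DD (0, 1) f p / q p) ^ 2 - f p ^ 2 * ((κ p / q p) ^ 2 -
        (P11 p * s p ^ 2 - (P12 p + P21 p) * s p * c p + P22 p * c p ^ 2))) * Φ p * q p
      - DD (0, 1) (fun p => f p * Φ p * (DD (0, 1) f p / q p)) p := by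
  have K := frame_core hS hx hy hq hc hs hf hq0 h1 xu yu xt yt hκ
  have sκ : Sm S κ := ((hc.mul (hs.dd hS _)).sub (hs.mul (hc.dd hS _))).congr hκ
  have hω : Sm S (fun p => DD (0, 1) f p / q p) := (hf.dd hS _).div hq hq0
  have sM : Sm S (fun p => B p * c p - A p * s p) := (sB.mul hc).sub (sA.mul hs)
  have sH : Sm S (fun p => q p * (B p * c p - A p * s p) - κ p) := (hq.mul sM).sub sκ
  have e1 : ∀ p ∈ S, DD (1, 0) (fun p => Φ p * q p) p
      = (f p * Φ p) * (q p * (B p * c p - A p * s p) - κ p) := by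
    intro p hp
    rw [DD_mul hS sΦ hq _ hp, hΦ _ p hp, (K p hp).1, xt p hp, yt p hp]
    ring
  obtain ⟨k1, k2, k3, k4⟩ := K p hp
  rw [DD_congr hS e1 _ hp, DD_mul hS (hf.mul sΦ) sH _ hp,
    DD_sub hS (hq.mul sM) sκ _ hp, DD_mul hS hq sM _ hp, DD_sub hS (sB.mul hc) (sA.mul hs) _ hp,
    DD_mul hS sB hc _ hp, DD_mul hS sA hs _ hp, DD_mul hS (hf.mul sΦ) hω _ hp,
    DD_mul hS hf sΦ _ hp, DD_mul hS hf sΦ _ hp, hA _ p hp, hB _ p hp, hΦ _ p hp, hΦ _ p hp,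
    k1, k2, k3, k4, xt p hp, yt p hp, xu p hp, yu p hp, ← hmin]
  have := hq0 p hp
  field_simp
  ring

theorem chain2 {U S : Set (ℝ × ℝ)} (hU : IsOpen U) (hS : IsOpen S) {h : ℝ × ℝ → ℝ}
    (hh : Sm U h) {x y : ℝ × ℝ → ℝ} (hx : Sm S x) (hy : Sm S y)
    (hxy : ∀ p ∈ S, (x p, y p) ∈ U) :
    Sm S (fun p => h (x p, y p)) ∧ ∀ v, ∀ p ∈ S, DD v (fun p => h (x p, y p)) p
      = DD (1, 0) h (x p, y p) * DD v x p + DD (0, 1) h (x p, y p) * DD v y p := by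
  refine ⟨ContDiffOn.comp hh (ContDiffOn.prodMk hx hy) hxy, fun v p hp => ?_⟩
  have e := (hh.dAt hU (hxy p hp)).hasFDerivAt.comp p
    ((hx.dAt hS hp).hasFDerivAt.prodMk (hy.dAt hS hp).hasFDerivAt)
  have e2 : fderiv ℝ (fun p => h (x p, y p)) p = _ := e.fderiv
  unfold DD
  rw [e2]
  have e3 : ((fderiv ℝ x p v, fderiv ℝ y p v) : ℝ × ℝ)
    = fderiv ℝ x p v • (1, 0) + fderiv ℝ y p v • (0, 1) := by simp
  simp only [ContinuousLinearMap.comp_apply, ContinuousLinearMap.prod_apply]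
  rw [e3, map_add, map_smul, map_smul]
  simp only [smul_eq_mul]; ring

/-- second variation of the ψ-length at a ψ-minimal curve under a
normal variation ∂_t γ = f N. -/
theorem psiLength_second_variation
    (ε : ℝ) (hε : 0 < ε) (γ : ℝ → ℝ → ℝ × ℝ) (f : ℝ → ℝ → ℝ)
    (hfam : SmoothFamily γ)
    (hf : ContDiff ℝ (⊤ : ℕ∞) fun p : ℝ × ℝ => f p.1 p.2)
    (hclosed : ∀ t ∈ Set.Ioo (-ε) ε, IsClosedCurve (γ t))
    (ψ : ℝ × ℝ → ℝ) (U : Set (ℝ × ℝ)) (hU : IsOpen U)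
    (hψ : ContDiffOn ℝ (⊤ : ℕ∞) ψ U)
    (him : ∀ t ∈ Set.Ioo (-ε) ε, ∀ u : ℝ, γ t u ∈ U)
    (hflow : ∀ t ∈ Set.Ioo (-ε) ε, ∀ u : ℝ,
      deriv (fun τ => γ τ u) t = f t u • normalC (γ t) u)
    (hminimal : IsPsiMinimal ψ (γ 0)) :
    iteratedDeriv 2
      (fun τ => ∫ u in (0:ℝ)..(2*π), Real.exp (ψ (γ τ u)) * nrm2 (deriv (γ τ) u)) 0
    = ∫ u in (0:ℝ)..(2*π),
        ((arcDeriv (γ 0) (f 0) u) ^ 2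
          - (f 0 u) ^ 2 * ((curvature (γ 0) u) ^ 2 - hess2 ψ (γ 0 u) (normalC (γ 0) u)))
          * Real.exp (ψ (γ 0 u)) * nrm2 (deriv (γ 0) u) := by
  have hS := strip_open ε
  have h0 : (0:ℝ) ∈ Set.Ioo (-ε) ε := ⟨by linarith, hε⟩
  set S := strip ε with hSdef
  have hΓ : ContDiff ℝ (⊤ : ℕ∞) fun p : ℝ × ℝ => γ p.1 p.2 := hfam
  let x : ℝ × ℝ → ℝ := fun p => (γ p.1 p.2).1
  let y : ℝ × ℝ → ℝ := fun p => (γ p.1 p.2).2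
  have hx : Sm S x := hΓ.fst.contDiffOn
  have hy : Sm S y := hΓ.snd.contDiffOn
  let F : ℝ × ℝ → ℝ := fun p => f p.1 p.2
  have hF : Sm S F := hf.contDiffOn
  let q : ℝ × ℝ → ℝ := fun p => nrm2 (DD (0, 1) x p, DD (0, 1) y p)
  have dγ : ∀ t ∈ Set.Ioo (-ε) ε, ∀ u, deriv (γ t) u = (DD (0, 1) x (t, u), DD (0, 1) y (t, u)) := by
    intro t ht u
    have := (hx.hasDerivAt_snd hS (t := t) (u := u) ht).prodMk (hy.hasDerivAt_snd hS (t := t) (u := u) ht)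
    exact this.deriv
  have dγt : ∀ t ∈ Set.Ioo (-ε) ε, ∀ u,
      deriv (fun τ => γ τ u) t = (DD (1, 0) x (t, u), DD (1, 0) y (t, u)) := by
    intro t ht u
    have := (hx.hasDerivAt_fst hS (t := t) (u := u) ht).prodMk (hy.hasDerivAt_fst hS (t := t) (u := u) ht)
    exact this.deriv
  have hpos : ∀ p ∈ S, 0 < DD (0, 1) x p ^ 2 + DD (0, 1) y p ^ 2 := by
    rintro ⟨t, u⟩ hp
    have h := (hclosed t hp).regular u
    rw [dγ t hp u] at h
    by_contra hn
    apply h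
    have e1 : DD (0, 1) x (t, u) = 0 := by nlinarith [sq_nonneg (DD (0, 1) x (t, u)), sq_nonneg (DD (0, 1) y (t, u))]
    have e2 : DD (0, 1) y (t, u) = 0 := by nlinarith [sq_nonneg (DD (0, 1) x (t, u)), sq_nonneg (DD (0, 1) y (t, u))]
    rw [e1, e2]; rfl
  have hqpos : ∀ p ∈ S, 0 < q p := fun p hp => Real.sqrt_pos.2 (hpos p hp)
  have hq0 : ∀ p ∈ S, q p ≠ 0 := fun p hp => (hqpos p hp).ne'
  have hqsq : ∀ p ∈ S, q p * q p = DD (0, 1) x p ^ 2 + DD (0, 1) y p ^ 2 :=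
    fun p hp => Real.mul_self_sqrt (hpos p hp).le
  have hq : Sm S q :=
    ContDiffOn.sqrt (((hx.dd hS _).pow 2).add ((hy.dd hS _).pow 2)) (fun p hp => (hpos p hp).ne')
  let c : ℝ × ℝ → ℝ := fun p => DD (0, 1) x p / q p
  let s : ℝ × ℝ → ℝ := fun p => DD (0, 1) y p / q p
  have hc : Sm S c := (hx.dd hS _).div hq hq0
  have hs : Sm S s := (hy.dd hS _).div hq hq0
  have h1 : ∀ p ∈ S, c p * c p + s p * s p = 1 := by
    intro p hp
    have a := hq0 p hp
    have b := hqsq p hp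
    simp only [c, s]
    field_simp
    linarith
  have xu : ∀ p ∈ S, DD (0, 1) x p = q p * c p := by
    intro p hp
    have a := hq0 p hp
    simp only [c]
    field_simp
  have yu : ∀ p ∈ S, DD (0, 1) y p = q p * s p := by
    intro p hp
    have a := hq0 p hp
    simp only [s]
    field_simp
  have tang : ∀ t ∈ Set.Ioo (-ε) ε, tangentC (γ t) = fun u => (c (t, u), s (t, u)) := by
    intro t ht
    funext u
    unfold tangentC
    rw [dγ t ht u]
    simp only [c, s, q, Prod.smul_mk, smul_eq_mul, div_eq_inv_mul]
  have norm : ∀ t ∈ Set.Ioo (-ε) ε, ∀ u, normalC (γ t) u = (- s (t, u), c (t, u)) := by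
    intro t ht u
    unfold normalC
    rw [tang t ht]
    rfl
  have xt : ∀ p ∈ S, DD (1, 0) x p = - (F p * s p) := by
    rintro ⟨t, u⟩ hp
    have h := hflow t hp u
    rw [dγt t hp u, norm t hp u] at h
    have := congrArg Prod.fst h
    simpa [F] using this
  have yt : ∀ p ∈ S, DD (1, 0) y p = F p * c p := by
    rintro ⟨t, u⟩ hp
    have h := hflow t hp u
    rw [dγt t hp u, norm t hp u] at h
    have := congrArg Prod.snd h
    simpa [F] using this
  let κ : ℝ × ℝ → ℝ := fun p => c p * DD (0, 1) s p - s p * DD (0, 1) c p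
  have curv : ∀ u, curvature (γ 0) u = κ (0, u) / q (0, u) := by
    intro u
    unfold curvature arcDeriv
    rw [norm 0 h0 u, tang 0 h0, dγ 0 h0 u,
      ((hc.hasDerivAt_snd hS (t := 0) (u := u) h0).prodMk
        (hs.hasDerivAt_snd hS (t := 0) (u := u) h0)).deriv]
    simp only [dot2, κ, Prod.smul_mk, smul_eq_mul, q]
    ring
  have hxy : ∀ p ∈ S, (x p, y p) ∈ U := fun p hp => him p.1 hp p.2
  have sψ : Sm U ψ := hψ
  obtain ⟨c1, c2⟩ := chain2 hU hS sψ hx hy hxy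
  obtain ⟨a1, a2⟩ := chain2 hU hS (sψ.dd hU (1, 0)) hx hy hxy
  obtain ⟨b1, b2⟩ := chain2 hU hS (sψ.dd hU (0, 1)) hx hy hxy
  let Φ : ℝ × ℝ → ℝ := fun p => Real.exp (ψ (x p, y p))
  have sΦ : Sm S Φ := ContDiffOn.exp c1
  have hΦ : ∀ v, ∀ p ∈ S, DD v Φ p = Φ p * (DD (1, 0) ψ (x p, y p) * DD v x p
      + DD (0, 1) ψ (x p, y p) * DD v y p) := by
    intro v p hp
    rw [← c2 v p hp]
    have := (c1.dAt hS hp).hasFDerivAt.exp.fderiv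
    simp only [DD, Φ]
    rw [this]
    simp
  have lin : ∀ (L : ℝ × ℝ →L[ℝ] ℝ) (α β : ℝ), L (α, β) = α * L (1, 0) + β * L (0, 1) := by
    intro L α β
    have e3 : ((α, β) : ℝ × ℝ) = α • (1, 0) + β • (0, 1) := by simp
    rw [e3, map_add, map_smul, map_smul]
    simp
  have hess : ∀ z ∈ U, ∀ α β : ℝ, hess2 ψ z (α, β) =
      DD (1, 0) (DD (1, 0) ψ) z * α ^ 2 + (DD (1, 0) (DD (0, 1) ψ) z
        + DD (0, 1) (DD (1, 0) ψ) z) * α * β + DD (0, 1) (DD (0, 1) ψ) z * β ^ 2 := by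
    intro z hz α β
    have e : hess2 ψ z (α, β) = DD (α, β) (DD (α, β) ψ) z := rfl
    rw [e]
    simp only [DD_DD hU sψ _ _ hz]
    rw [lin _ α β]
    have e3 : ((α, β) : ℝ × ℝ) = α • (1, 0) + β • (0, 1) := by simp
    rw [e3, map_add, map_smul, map_smul]
    simp only [ContinuousLinearMap.add_apply, ContinuousLinearMap.smul_apply, smul_eq_mul]
    ring
  have hmin : ∀ u, q (0, u) * (DD (0, 1) ψ (x (0, u), y (0, u)) * c (0, u)
      - DD (1, 0) ψ (x (0, u), y (0, u)) * s (0, u)) = κ (0, u) := by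
    intro u
    have h := hminimal u
    unfold psiCurv at h
    rw [curv u, norm 0 h0 u, lin] at h
    have a := hq0 (0, u) h0
    have h2 : κ (0, u) / q (0, u) = -s (0, u) * DD (1, 0) ψ (x (0, u), y (0, u))
      + c (0, u) * DD (0, 1) ψ (x (0, u), y (0, u)) := by
      simp only [DD, x, y] at h ⊢
      linarith
    rw [div_eq_iff a] at h2
    rw [h2]; ring
  have main : ∀ u, DD (1, 0) (DD (1, 0) (fun p => Φ p * q p)) (0, u) = _ := fun u =>
    frame_core2 hS (κ := κ) (p := (0, u)) hx hy hq hc hs hF hq0 h1 xu yu xt yt (fun p hp => rfl)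
      sΦ a1 b1 hΦ a2 b2 h0 (hmin u)
  have sG : Sm S (fun p => Φ p * q p) := sΦ.mul hq
  have LHS : iteratedDeriv 2
      (fun τ => ∫ u in (0:ℝ)..(2*π), Real.exp (ψ (γ τ u)) * nrm2 (deriv (γ τ) u)) 0
      = ∫ u in (0:ℝ)..(2*π), DD (1, 0) (DD (1, 0) (fun p => Φ p * q p)) (0, u) := by
    rw [iteratedDeriv_succ, iteratedDeriv_one]
    have ev : deriv (fun τ => ∫ u in (0:ℝ)..(2*π), Real.exp (ψ (γ τ u)) * nrm2 (deriv (γ τ) u))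
        =ᶠ[nhds 0] fun τ => ∫ u in (0:ℝ)..(2*π), DD (1, 0) (fun p => Φ p * q p) (τ, u) := by
      filter_upwards [Ioo_mem_nhds h0.1 h0.2] with t ht
      rw [← (param_int sG ht).deriv]
      apply Filter.EventuallyEq.deriv_eq
      filter_upwards [Ioo_mem_nhds ht.1 ht.2] with τ hτ
      congr 1
      funext u
      rw [dγ τ hτ u]
    rw [ev.deriv_eq]
    exact (param_int (sG.dd hS _) h0).deriv
  have sW : Sm S (fun p => F p * Φ p * (DD (0, 1) F p / q p)) :=
    (hF.mul sΦ).mul ((hF.dd hS _).div hq hq0)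
  have cont : ∀ {G : ℝ × ℝ → ℝ}, Sm S G → Continuous (fun u => G (0, u)) := fun hG =>
    hG.continuousOn.comp_continuous (by fun_prop) (fun u => h0)
  -- periodicity
  have perD : ∀ u, deriv (γ 0) (u + 2 * π) = deriv (γ 0) u := by
    intro u
    rw [← deriv_comp_add_const]
    congr 1
    funext w
    exact (hclosed 0 h0).periodic w
  have perq : ∀ u, q (0, u + 2 * π) = q (0, u) := by
    intro u
    have e : ∀ u, q (0, u) = nrm2 (deriv (γ 0) u) := fun u => by rw [dγ 0 h0 u]
    rw [e, e, perD]
  have perN : ∀ u, normalC (γ 0) (u + 2 * π) = normalC (γ 0) u := by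
    intro u
    unfold normalC tangentC
    rw [perD]
  have perF : ∀ u, f 0 (u + 2 * π) = f 0 u := by
    intro u
    have e : deriv (fun τ => γ τ (u + 2 * π)) 0 = deriv (fun τ => γ τ u) 0 := by
      apply Filter.EventuallyEq.deriv_eq
      filter_upwards [Ioo_mem_nhds h0.1 h0.2] with τ hτ
      exact (hclosed τ hτ).periodic u
    rw [hflow 0 h0, hflow 0 h0, perN, norm 0 h0] at e
    have e1 := congrArg Prod.fst e
    have e2 := congrArg Prod.snd e
    simp only [Prod.smul_mk, smul_eq_mul] at e1 e2
    linear_combination (f 0 u - f 0 (u + 2 * π)) * h1 (0, u) h0 - s (0, u) * e1 + c (0, u) * e2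
  have dF : ∀ u, DD (0, 1) F (0, u) = deriv (f 0) u := fun u =>
    (hF.hasDerivAt_snd hS (t := 0) (u := u) h0).deriv.symm
  have perdF : ∀ u, DD (0, 1) F (0, u + 2 * π) = DD (0, 1) F (0, u) := by
    intro u
    rw [dF, dF, ← deriv_comp_add_const]
    congr 1
    funext w
    exact perF w
  have perΦ : ∀ u, Φ (0, u + 2 * π) = Φ (0, u) := by
    intro u
    simp only [Φ, x, y]
    rw [(hclosed 0 h0).periodic u]
  have bdry : ∫ u in (0:ℝ)..(2*π), DD (0, 1) (fun p => F p * Φ p * (DD (0, 1) F p / q p)) (0, u)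
      = 0 := by
    rw [intervalIntegral.integral_eq_sub_of_hasDerivAt
      (fun u _ => sW.hasDerivAt_snd hS (t := 0) (u := u) h0)
      ((cont (sW.dd hS _)).intervalIntegrable _ _)]
    have e := perF 0
    have e2 := perdF 0
    have e3 := perΦ 0
    have e4 := perq 0
    rw [zero_add] at e e2 e3 e4
    simp only [F] at e2 ⊢
    rw [e, e2, e3, e4, sub_self]
  rw [LHS]
  have fin : ∀ u, ((arcDeriv (γ 0) (f 0) u) ^ 2
          - (f 0 u) ^ 2 * ((curvature (γ 0) u) ^ 2 - hess2 ψ (γ 0 u) (normalC (γ 0) u)))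
          * Real.exp (ψ (γ 0 u)) * nrm2 (deriv (γ 0) u)
      = DD (1, 0) (DD (1, 0) (fun p => Φ p * q p)) (0, u)
        + DD (0, 1) (fun p => F p * Φ p * (DD (0, 1) F p / q p)) (0, u) := by
    intro u
    rw [main u, curv u, norm 0 h0 u, hess _ (him 0 h0 u)]
    unfold arcDeriv
    rw [← dF u, dγ 0 h0 u]
    simp only [smul_eq_mul, F, Φ, q, x, y]
    ring
  simp_rw [fin]
  rw [intervalIntegral.integral_add, bdry, add_zero]
  · exact (cont ((sG.dd hS _).dd hS _)).intervalIntegrable _ _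
  · exact (cont (sW.dd hS _)).intervalIntegrable _ _
end
end

section
/- Let γ: ℝ × [0,T) → ℝ² evolve by ψMCF, with ψ smooth on an open set containing all the images γ(ℝ,t). Then the ψ-curvature satisfies the parabolic equation ∂_t k_ψ = ∂_s² k_ψ + ⟨∇ψ(γ), T⟩ · ∂_s k_ψ + k_ψ · ( k² − (Hess ψ)(γ)(N,N) ), where (Hess ψ)(γ)(N,N) is the second derivative of ψ at γ(u,t) in the direction N. -/
noncomputable section
open Real Set

def DuF (F : ℝ × ℝ → ℝ) (p : ℝ × ℝ) : ℝ := fderiv ℝ F p (0, 1)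
def DtF (F : ℝ × ℝ → ℝ) (p : ℝ × ℝ) : ℝ := fderiv ℝ F p (1, 0)

lemma DuF_smooth {F : ℝ × ℝ → ℝ} (h : ContDiff ℝ (⊤ : ℕ∞) F) :
    ContDiff ℝ (⊤ : ℕ∞) (DuF F) :=
  (h.fderiv_right (m := (⊤ : ℕ∞)) (by simp)).clm_apply contDiff_const

lemma DtF_smooth {F : ℝ × ℝ → ℝ} (h : ContDiff ℝ (⊤ : ℕ∞) F) :
    ContDiff ℝ (⊤ : ℕ∞) (DtF F) :=
  (h.fderiv_right (m := (⊤ : ℕ∞)) (by simp)).clm_apply contDiff_const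

lemma DuF_has {F : ℝ × ℝ → ℝ} (h : ContDiff ℝ (⊤ : ℕ∞) F) (t u : ℝ) :
    HasDerivAt (fun u' => F (t, u')) (DuF F (t, u)) u := by
  have h1 : HasFDerivAt F (fderiv ℝ F (t, u)) (t, u) :=
    (h.differentiable (by simp) (t, u)).hasFDerivAt
  exact h1.comp_hasDerivAt u ((hasDerivAt_const u t).prodMk (hasDerivAt_id u))

lemma DtF_has {F : ℝ × ℝ → ℝ} (h : ContDiff ℝ (⊤ : ℕ∞) F) (t u : ℝ) :
    HasDerivAt (fun τ => F (τ, u)) (DtF F (t, u)) t := by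
  have h1 : HasFDerivAt F (fderiv ℝ F (t, u)) (t, u) :=
    (h.differentiable (by simp) (t, u)).hasFDerivAt
  exact h1.comp_hasDerivAt t ((hasDerivAt_id t).prodMk (hasDerivAt_const t u))

lemma Dcomm {F : ℝ × ℝ → ℝ} (h : ContDiff ℝ (⊤ : ℕ∞) F) (p : ℝ × ℝ) :
    DtF (DuF F) p = DuF (DtF F) p := by
  have h2 : DifferentiableAt ℝ (fderiv ℝ F) p :=
    (h.fderiv_right (m := (⊤ : ℕ∞)) (by simp)).differentiable (by simp) p
  have hs : IsSymmSndFDerivAt ℝ F p :=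
    h.contDiffAt.isSymmSndFDerivAt
      (by simp; exact WithTop.coe_le_coe.2 (le_top : (2 : ℕ∞) ≤ ⊤))
  have e (v w : ℝ × ℝ) :
      fderiv ℝ (fun q => fderiv ℝ F q v) p w = fderiv ℝ (fderiv ℝ F) p w v := by
    rw [fderiv_clm_apply h2 (differentiableAt_const v)]
    simp
  show fderiv ℝ (fun q => fderiv ℝ F q (0, 1)) p (1, 0)
    = fderiv ℝ (fun q => fderiv ℝ F q (1, 0)) p (0, 1)
  rw [e, e]
  exact hs _ _

lemma v_has {p q : ℝ → ℝ} {u p2 q2 : ℝ} (hp : HasDerivAt p p2 u) (hq : HasDerivAt q q2 u)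
    (hpos : 0 < p u ^ 2 + q u ^ 2) :
    HasDerivAt (fun x => √(p x ^ 2 + q x ^ 2)) ((p u * p2 + q u * q2) / √(p u ^ 2 + q u ^ 2)) u := by
  have := ((hp.pow 2).add (hq.pow 2)).sqrt hpos.ne'
  refine this.congr_deriv ?_
  have hv : √(p u ^ 2 + q u ^ 2) ≠ 0 := (Real.sqrt_pos.2 hpos).ne'
  simp only [Pi.add_apply, Pi.pow_apply]
  field_simp
  ring

/-- tangent components -/
lemma T_has {p q : ℝ → ℝ} {u p2 q2 : ℝ} (hp : HasDerivAt p p2 u) (hq : HasDerivAt q q2 u)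
    (hpos : 0 < p u ^ 2 + q u ^ 2) :
    HasDerivAt (fun x => p x / √(p x ^ 2 + q x ^ 2))
      (-((p u * q2 - q u * p2) / √(p u ^ 2 + q u ^ 2) ^ 3) * q u) u ∧
    HasDerivAt (fun x => q x / √(p x ^ 2 + q x ^ 2))
      (((p u * q2 - q u * p2) / √(p u ^ 2 + q u ^ 2) ^ 3) * p u) u := by
  have hv : √(p u ^ 2 + q u ^ 2) ≠ 0 := (Real.sqrt_pos.2 hpos).ne'
  have hs : √(p u ^ 2 + q u ^ 2) ^ 2 = p u ^ 2 + q u ^ 2 := Real.sq_sqrt hpos.le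
  have h := v_has hp hq hpos
  constructor
  · refine (hp.div h hv).congr_deriv ?_
    generalize √(p u ^ 2 + q u ^ 2) = v at *
    field_simp
    rw [hs]; ring
  · refine (hq.div h hv).congr_deriv ?_
    generalize √(p u ^ 2 + q u ^ 2) = v at *
    field_simp
    rw [hs]; ring

lemma tangentC_eq {c : ℝ → ℝ × ℝ} {p q : ℝ → ℝ} (hc : ∀ x, deriv c x = (p x, q x)) (u : ℝ) :
    tangentC c u = (p u / √(p u ^ 2 + q u ^ 2), q u / √(p u ^ 2 + q u ^ 2)) := by
  simp [tangentC, hc, nrm2, div_eq_inv_mul]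

lemma normalC_eq {c : ℝ → ℝ × ℝ} {p q : ℝ → ℝ} (hc : ∀ x, deriv c x = (p x, q x)) (u : ℝ) :
    normalC c u = (-(q u / √(p u ^ 2 + q u ^ 2)), p u / √(p u ^ 2 + q u ^ 2)) := by
  rw [normalC, tangentC_eq hc, Jrot]

lemma curvature_eq {c : ℝ → ℝ × ℝ} {p q : ℝ → ℝ} {u p2 q2 : ℝ}
    (hc : ∀ x, deriv c x = (p x, q x)) (hp : HasDerivAt p p2 u) (hq : HasDerivAt q q2 u)
    (hpos : 0 < p u ^ 2 + q u ^ 2) :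
    curvature c u = (p u * q2 - q u * p2) / √(p u ^ 2 + q u ^ 2) ^ 3 := by
  have hv : √(p u ^ 2 + q u ^ 2) ≠ 0 := (Real.sqrt_pos.2 hpos).ne'
  have hs : √(p u ^ 2 + q u ^ 2) ^ 2 = p u ^ 2 + q u ^ 2 := Real.sq_sqrt hpos.le
  have hT : tangentC c = fun x => (p x / √(p x ^ 2 + q x ^ 2), q x / √(p x ^ 2 + q x ^ 2)) :=
    funext (tangentC_eq hc)
  obtain ⟨h1, h2⟩ := T_has hp hq hpos
  have hd := (h1.prodMk h2).deriv
  rw [curvature, arcDeriv, normalC_eq hc, hT, hd, hc]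
  simp only [dot2, nrm2, Prod.smul_mk, smul_eq_mul]
  generalize √(p u ^ 2 + q u ^ 2) = v at *
  field_simp
  linear_combination (-(p u * q2 - q u * p2)) * hs

lemma final_alg (p q p2 q2 v f f1 f2 k k1 pt qt p2t q2t vt : ℝ) (hv : v ≠ 0)
    (hs : v ^ 2 = p ^ 2 + q ^ 2) (hk : k = (p * q2 - q * p2) / v ^ 3)
    (hpt : pt = f1 * -(q / v) - f * k * p)
    (hqt : qt = f1 * (p / v) - f * k * q)
    (hp2t : p2t = f2 * -(q / v) - 2 * f1 * k * p - f * (k1 * p + k * p2))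
    (hq2t : q2t = f2 * (p / v) - 2 * f1 * k * q - f * (k1 * q + k * q2))
    (hvt : vt = (p * pt + q * qt) / v) :
    ((pt * q2 + p * q2t - (qt * p2 + q * p2t)) * v ^ 3
        - (p * q2 - q * p2) * (3 * v ^ 2 * vt)) / (v ^ 3) ^ 2
      = v⁻¹ * (f2 / v - f1 * ((p * p2 + q * q2) / v) / v ^ 2) + f * k ^ 2 ∧
    -((qt * v - q * vt) / v ^ 2) = - (v⁻¹ * f1) * (p / v) ∧
    (pt * v - p * vt) / v ^ 2 = - (v⁻¹ * f1) * (q / v) := by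
  have hvt' : vt = - f * k * v := by
    rw [hvt, hpt, hqt]; field_simp; linear_combination (f * k * v) * hs
  have hk' : p * q2 - q * p2 = k * v ^ 3 := by rw [hk]; field_simp
  have hA : pt * q2 + p * q2t - (qt * p2 + q * p2t)
      = - f1 * ((p * p2 + q * q2) / v) + f2 * v - 2 * f * k * (k * v ^ 3) := by
    have e : f2 * v = f2 * (p ^ 2 + q ^ 2) / v := by rw [← hs]; field_simp
    rw [e, ← hk', hpt, hqt, hp2t, hq2t]; field_simp; ring
  refine ⟨?_, ?_, ?_⟩
  · rw [hA, hk', hvt']; field_simp; ring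
  · rw [hvt', hqt]; field_simp; ring
  · rw [hvt', hpt]; field_simp; ring

/-- under ψMCF the ψ-curvature satisfies
∂_t k_ψ = ∂_s² k_ψ + ⟨∇ψ, T⟩ ∂_s k_ψ + k_ψ (k² − Hess ψ(N,N)). -/
theorem psiCurvature_evolution
    (T : ℝ) (hT : 0 < T) (γ : ℝ → ℝ → ℝ × ℝ)
    (hfam : SmoothFamily γ)
    (hclosed : ∀ t ∈ Set.Ico (0:ℝ) T, IsClosedCurve (γ t))
    (ψ : ℝ × ℝ → ℝ) (U : Set (ℝ × ℝ)) (hU : IsOpen U)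
    (hψ : ContDiffOn ℝ (⊤ : ℕ∞) ψ U)
    (him : ∀ t ∈ Set.Ico (0:ℝ) T, ∀ u : ℝ, γ t u ∈ U)
    (hflow : ∀ t ∈ Set.Ico (0:ℝ) T, ∀ u : ℝ,
      deriv (fun τ => γ τ u) t = psiCurv ψ (γ t) u • normalC (γ t) u) :
    ∀ t ∈ Set.Ico (0:ℝ) T, ∀ u : ℝ,
      deriv (fun τ => psiCurv ψ (γ τ) u) t
        = arcDeriv (γ t) (fun u' => arcDeriv (γ t) (fun u'' => psiCurv ψ (γ t) u'') u') u
          + fderiv ℝ ψ (γ t u) (tangentC (γ t) u)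
              * arcDeriv (γ t) (fun u' => psiCurv ψ (γ t) u') u
          + psiCurv ψ (γ t) u
              * ((curvature (γ t) u) ^ 2 - hess2 ψ (γ t u) (normalC (γ t) u)) := by
  intro t ht u
  -- components
  set X : ℝ × ℝ → ℝ := fun z => (γ z.1 z.2).1 with hXdef
  set Y : ℝ × ℝ → ℝ := fun z => (γ z.1 z.2).2 with hYdef
  have hX : ContDiff ℝ (⊤ : ℕ∞) X := contDiff_fst.comp hfam
  have hY : ContDiff ℝ (⊤ : ℕ∞) Y := contDiff_snd.comp hfam
  have hX1 := DuF_smooth hX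
  have hY1 := DuF_smooth hY
  have hX2 := DuF_smooth hX1
  have hY2 := DuF_smooth hY1
  have hγu : ∀ τ x, HasDerivAt (γ τ) (DuF X (τ, x), DuF Y (τ, x)) x := fun τ x =>
    (DuF_has hX τ x).prodMk (DuF_has hY τ x)
  have hγt : ∀ τ x, HasDerivAt (fun τ => γ τ x) (DtF X (τ, x), DtF Y (τ, x)) τ := fun τ x =>
    (DtF_has hX τ x).prodMk (DtF_has hY τ x)
  have hc : ∀ τ x, deriv (γ τ) x = (DuF X (τ, x), DuF Y (τ, x)) := fun τ x => (hγu τ x).deriv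
  -- functions at time t
  have hpos : ∀ x, 0 < DuF X (t, x) ^ 2 + DuF Y (t, x) ^ 2 := by
    intro x
    have h := (hclosed t ht).regular x
    rw [hc] at h
    by_contra hcon
    apply h
    have h1 : DuF X (t, x) = 0 := by nlinarith [sq_nonneg (DuF X (t, x)), sq_nonneg (DuF Y (t, x))]
    have h2 : DuF Y (t, x) = 0 := by nlinarith [sq_nonneg (DuF X (t, x)), sq_nonneg (DuF Y (t, x))]
    rw [h1, h2]; rfl
  have hcurv : ∀ τ x, 0 < DuF X (τ, x) ^ 2 + DuF Y (τ, x) ^ 2 → curvature (γ τ) x =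
      (DuF X (τ, x) * DuF (DuF Y) (τ, x) - DuF Y (τ, x) * DuF (DuF X) (τ, x))
        / √(DuF X (τ, x) ^ 2 + DuF Y (τ, x) ^ 2) ^ 3 := fun τ x h =>
    curvature_eq (p := fun x => DuF X (τ, x)) (q := fun x => DuF Y (τ, x))
      (hc τ) (DuF_has hX1 τ x) (DuF_has hY1 τ x) h
  have hN : ∀ τ x, normalC (γ τ) x = (-(DuF Y (τ, x) / √(DuF X (τ, x) ^ 2 + DuF Y (τ, x) ^ 2)),
      DuF X (τ, x) / √(DuF X (τ, x) ^ 2 + DuF Y (τ, x) ^ 2)) := fun τ x =>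
    normalC_eq (p := fun x => DuF X (τ, x)) (q := fun x => DuF Y (τ, x)) (hc τ) x
  have hTan : ∀ τ x, tangentC (γ τ) x = (DuF X (τ, x) / √(DuF X (τ, x) ^ 2 + DuF Y (τ, x) ^ 2),
      DuF Y (τ, x) / √(DuF X (τ, x) ^ 2 + DuF Y (τ, x) ^ 2)) := fun τ x =>
    tangentC_eq (p := fun x => DuF X (τ, x)) (q := fun x => DuF Y (τ, x)) (hc τ) x
  have hin : ContDiff ℝ (⊤ : ℕ∞) (fun x : ℝ => (t, x)) := contDiff_const.prodMk contDiff_id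
  have sp : ContDiff ℝ (⊤ : ℕ∞) (fun x => DuF X (t, x)) := hX1.comp hin
  have sq : ContDiff ℝ (⊤ : ℕ∞) (fun x => DuF Y (t, x)) := hY1.comp hin
  have sp2 : ContDiff ℝ (⊤ : ℕ∞) (fun x => DuF (DuF X) (t, x)) := hX2.comp hin
  have sq2 : ContDiff ℝ (⊤ : ℕ∞) (fun x => DuF (DuF Y) (t, x)) := hY2.comp hin
  have sv : ContDiff ℝ (⊤ : ℕ∞) (fun x => √(DuF X (t, x) ^ 2 + DuF Y (t, x) ^ 2)) :=
    ((sp.pow 2).add (sq.pow 2)).sqrt (fun x => (hpos x).ne')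
  have hv0 : ∀ x, √(DuF X (t, x) ^ 2 + DuF Y (t, x) ^ 2) ≠ 0 := fun x =>
    (Real.sqrt_pos.2 (hpos x)).ne'
  have sk : ContDiff ℝ (⊤ : ℕ∞) (fun x => curvature (γ t) x) := by
    have : (fun x => curvature (γ t) x) = _ := funext fun x => hcurv t x (hpos x)
    rw [this]
    exact ((sp.mul sq2).sub (sq.mul sp2)).div (sv.pow 3) (fun x => pow_ne_zero 3 (hv0 x))
  have sN : ContDiff ℝ (⊤ : ℕ∞) (fun x => normalC (γ t) x) := by
    have : (fun x => normalC (γ t) x) = _ := funext fun x => hN t x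
    rw [this]
    exact ((sq.div sv hv0).neg).prodMk (sp.div sv hv0)
  have sψ : ContDiffOn ℝ (⊤ : ℕ∞) (fderiv ℝ ψ) U :=
    hψ.fderiv_of_isOpen hU (by simp)
  have sf : ContDiff ℝ (⊤ : ℕ∞) (fun x => psiCurv ψ (γ t) x) := by
    have h1 : ContDiff ℝ (⊤ : ℕ∞) (fun x => fderiv ℝ ψ (γ t x)) :=
      sψ.comp_contDiff (hfam.comp hin) (fun x => him t ht x)
    exact sk.sub (h1.clm_apply sN)
  set f : ℝ → ℝ := fun x => psiCurv ψ (γ t) x with hf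
  set k : ℝ → ℝ := fun x => curvature (γ t) x with hk
  have sf1 : ContDiff ℝ (⊤ : ℕ∞) (deriv f) := (contDiff_infty_iff_deriv.1 sf).2
  have df : ∀ x, HasDerivAt f (deriv f x) x := fun x =>
    (sf.differentiable (by simp) x).hasDerivAt
  have df1 : ∀ x, HasDerivAt (deriv f) (deriv (deriv f) x) x := fun x =>
    (sf1.differentiable (by simp) x).hasDerivAt
  have dk : ∀ x, HasDerivAt k (deriv k x) x := fun x =>
    (sk.differentiable (by simp) x).hasDerivAt
  have hkx : ∀ x, k x = _ := fun x => hcurv t x (hpos x)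
  -- normal derivative in u
  have dN1 : ∀ x, HasDerivAt (fun x => -(DuF Y (t, x) / √(DuF X (t, x) ^ 2 + DuF Y (t, x) ^ 2)))
      (-(k x * DuF X (t, x))) x := fun x => by
    rw [hkx]
    exact (T_has (DuF_has hX1 t x) (DuF_has hY1 t x) (hpos x)).2.neg
  have dN2 : ∀ x, HasDerivAt (fun x => DuF X (t, x) / √(DuF X (t, x) ^ 2 + DuF Y (t, x) ^ 2))
      (-(k x) * DuF Y (t, x)) x := fun x => by
    rw [hkx]
    exact (T_has (DuF_has hX1 t x) (DuF_has hY1 t x) (hpos x)).1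
  -- flow in components
  have hfl : ∀ x, DtF X (t, x) = f x * -(DuF Y (t, x) / √(DuF X (t, x) ^ 2 + DuF Y (t, x) ^ 2)) ∧
      DtF Y (t, x) = f x * (DuF X (t, x) / √(DuF X (t, x) ^ 2 + DuF Y (t, x) ^ 2)) := by
    intro x
    have h := hflow t ht x
    rw [(hγt t x).deriv, hN] at h
    exact ⟨congrArg Prod.fst h, congrArg Prod.snd h⟩
  have hpt : ∀ x, DtF (DuF X) (t, x) =
      deriv f x * -(DuF Y (t, x) / √(DuF X (t, x) ^ 2 + DuF Y (t, x) ^ 2))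
        - f x * k x * DuF X (t, x) := by
    intro x
    rw [Dcomm hX]
    have h1 := DuF_has (DtF_smooth hX) t x
    rw [show (fun u' => DtF X (t, u')) = _ from funext fun x => (hfl x).1] at h1
    rw [h1.unique ((df x).mul (dN1 x))]; ring
  have hqt : ∀ x, DtF (DuF Y) (t, x) =
      deriv f x * (DuF X (t, x) / √(DuF X (t, x) ^ 2 + DuF Y (t, x) ^ 2))
        - f x * k x * DuF Y (t, x) := by
    intro x
    rw [Dcomm hY]
    have h1 := DuF_has (DtF_smooth hY) t x
    rw [show (fun u' => DtF Y (t, u')) = _ from funext fun x => (hfl x).2] at h1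
    rw [h1.unique ((df x).mul (dN2 x))]; ring
  have hp2t : DtF (DuF (DuF X)) (t, u) =
      deriv (deriv f) u * -(DuF Y (t, u) / √(DuF X (t, u) ^ 2 + DuF Y (t, u) ^ 2))
        - 2 * deriv f u * k u * DuF X (t, u)
        - f u * (deriv k u * DuF X (t, u) + k u * DuF (DuF X) (t, u)) := by
    rw [Dcomm hX1]
    have h1 := DuF_has (DtF_smooth hX1) t u
    rw [show (fun u' => DtF (DuF X) (t, u')) = _ from funext fun x => hpt x] at h1
    rw [h1.unique (((df1 u).mul (dN1 u)).sub (((df u).mul (dk u)).mul (DuF_has hX1 t u)))]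
    simp only [Pi.mul_apply]
    ring
  have hq2t : DtF (DuF (DuF Y)) (t, u) =
      deriv (deriv f) u * (DuF X (t, u) / √(DuF X (t, u) ^ 2 + DuF Y (t, u) ^ 2))
        - 2 * deriv f u * k u * DuF Y (t, u)
        - f u * (deriv k u * DuF Y (t, u) + k u * DuF (DuF Y) (t, u)) := by
    rw [Dcomm hY1]
    have h1 := DuF_has (DtF_smooth hY1) t u
    rw [show (fun u' => DtF (DuF Y) (t, u')) = _ from funext fun x => hqt x] at h1
    rw [h1.unique (((df1 u).mul (dN2 u)).sub (((df u).mul (dk u)).mul (DuF_has hY1 t u)))]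
    simp only [Pi.mul_apply]
    ring
  have hvt := v_has (p := fun τ => DuF X (τ, u)) (q := fun τ => DuF Y (τ, u))
    (DtF_has hX1 t u) (DtF_has hY1 t u) (hpos u)
  obtain ⟨a1, a2, a3⟩ := final_alg _ _ _ _ _ (f u) (deriv f u) (deriv (deriv f) u) (k u)
    (deriv k u) _ _ _ _ _ (hv0 u) (Real.sq_sqrt (hpos u).le) (hkx u) (hpt u) (hqt u) hp2t hq2t rfl
  -- time derivative of curvature
  have hposev : ∀ᶠ τ in nhds t, 0 < DuF X (τ, u) ^ 2 + DuF Y (τ, u) ^ 2 := by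
    have hcont : ContinuousAt (fun τ => DuF X (τ, u) ^ 2 + DuF Y (τ, u) ^ 2) t :=
      ((DtF_has hX1 t u).continuousAt.pow 2).add ((DtF_has hY1 t u).continuousAt.pow 2)
    exact hcont.eventually (lt_mem_nhds (hpos u))
  have dkt : HasDerivAt (fun τ => curvature (γ τ) u)
      ((√(DuF X (t, u) ^ 2 + DuF Y (t, u) ^ 2))⁻¹ * (deriv (deriv f) u /
        √(DuF X (t, u) ^ 2 + DuF Y (t, u) ^ 2) - deriv f u * ((DuF X (t, u) * DuF (DuF X) (t, u)
        + DuF Y (t, u) * DuF (DuF Y) (t, u)) / √(DuF X (t, u) ^ 2 + DuF Y (t, u) ^ 2))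
        / √(DuF X (t, u) ^ 2 + DuF Y (t, u) ^ 2) ^ 2) + f u * k u ^ 2) t := by
    rw [← a1]
    have h1 := (((DtF_has hX1 t u).mul (DtF_has hY2 t u)).sub
      ((DtF_has hY1 t u).mul (DtF_has hX2 t u))).div (hvt.pow 3) (pow_ne_zero 3 (hv0 u))
    refine HasDerivAt.congr_of_eventuallyEq (h1.congr_deriv ?_) (hposev.mono fun τ h => hcurv τ u h)
    simp
  have dNt : HasDerivAt (fun τ => normalC (γ τ) u)
      (-((√(DuF X (t, u) ^ 2 + DuF Y (t, u) ^ 2))⁻¹ * deriv f u) • tangentC (γ t) u) t := by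
    rw [show (fun τ => normalC (γ τ) u) = _ from funext fun τ => hN τ u, hTan]
    have h1 := ((DtF_has hY1 t u).div hvt (hv0 u)).neg.prodMk
      ((DtF_has hX1 t u).div hvt (hv0 u))
    refine h1.congr_deriv ?_
    rw [Prod.smul_mk]
    exact Prod.ext a2 a3
  have hψ2 : DifferentiableAt ℝ (fderiv ℝ ψ) (γ t u) :=
    (sψ.contDiffAt (hU.mem_nhds (him t ht u))).differentiableAt (by simp)
  have dγ : HasDerivAt (fun τ => γ τ u) (f u • normalC (γ t) u) t := by
    have h := (hγt t u)
    have h2 := hflow t ht u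
    rw [h.deriv] at h2
    rwa [h2] at h
  have dψ : HasDerivAt (fun τ => fderiv ℝ ψ (γ τ u))
      (fderiv ℝ (fderiv ℝ ψ) (γ t u) (f u • normalC (γ t) u)) t :=
    hψ2.hasFDerivAt.comp_hasDerivAt t dγ
  have htot := dkt.sub (dψ.clm_apply dNt)
  have hhess : hess2 ψ (γ t u) (normalC (γ t) u)
      = fderiv ℝ (fderiv ℝ ψ) (γ t u) (normalC (γ t) u) (normalC (γ t) u) := by
    rw [hess2, fderiv_clm_apply hψ2 (differentiableAt_const _)]
    simp
  have hnrm : ∀ x, nrm2 (deriv (γ t) x) = √(DuF X (t, x) ^ 2 + DuF Y (t, x) ^ 2) := by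
    intro x; rw [hc]; rfl
  have hss : deriv (fun u' => arcDeriv (γ t) f u') u = deriv (deriv f) u /
        √(DuF X (t, u) ^ 2 + DuF Y (t, u) ^ 2) - deriv f u * ((DuF X (t, u) * DuF (DuF X) (t, u)
        + DuF Y (t, u) * DuF (DuF Y) (t, u)) / √(DuF X (t, u) ^ 2 + DuF Y (t, u) ^ 2))
        / √(DuF X (t, u) ^ 2 + DuF Y (t, u) ^ 2) ^ 2 := by
    have e : (fun u' => arcDeriv (γ t) f u') =
        fun x => deriv f x / √(DuF X (t, x) ^ 2 + DuF Y (t, x) ^ 2) := by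
      funext x
      rw [arcDeriv, hnrm, smul_eq_mul, div_eq_inv_mul]
    rw [e]
    refine ((df1 u).div (v_has (DuF_has hX1 t u) (DuF_has hY1 t u) (hpos u)) (hv0 u)).deriv.trans ?_
    have := hv0 u
    generalize √(DuF X (t, u) ^ 2 + DuF Y (t, u) ^ 2) = v at *
    field_simp
  have hl : deriv (fun τ => psiCurv ψ (γ τ) u) t = _ := htot.deriv
  rw [hl, hhess]
  show _ = arcDeriv (γ t) (fun u' => arcDeriv (γ t) f u') u
    + fderiv ℝ ψ (γ t u) (tangentC (γ t) u) * arcDeriv (γ t) f u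
    + f u * (k u ^ 2 - _)
  rw [arcDeriv, hss, arcDeriv, hnrm]
  simp only [map_smul, smul_eq_mul, smul_apply]
  ring
end
end
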